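/- arXiv:2209.03510 — 4 statements merged into one kernel-verified Lean document; each statement's English description precedes it below -/
import Mathlib

section
/- Let D be a bounded domain in ℂⁿ and p > 0. Define the p-Bergman kernel B_{D,p}(z) := sup_{φ ∈ A^p(D), φ ≠ 0} |φ(z)|² / ‖φ‖_p². Then B_{D,p} is a continuous function on D. -/
open MeasureTheory

noncomputable def apNorm (n : ℕ) (p : ℝ) (D : Set (Fin n → ℂ))
    (φ : (Fin n → ℂ) → ℂ) : ℝ :=
  (∫ z in D, ‖φ z‖ ^ p) ^ (1 / p)

def MemAp (n : ℕ) (p : ℝ) (D : Set (Fin n → ℂ)) (φ : (Fin n → ℂ) → ℂ) : Prop :=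
  DifferentiableOn ℂ φ D ∧ IntegrableOn (fun z => ‖φ z‖ ^ p) D volume

/-- The `p`-Bergman kernel `B_{D,p}(z) = sup {‖φ(z)‖² / ‖φ‖_p² : φ ∈ A^p(D), φ ≠ 0}`. -/
noncomputable def pBergman (n : ℕ) (p : ℝ) (D : Set (Fin n → ℂ))
    (z : Fin n → ℂ) : ℝ :=
  sSup {x : ℝ | ∃ φ : (Fin n → ℂ) → ℂ, MemAp n p D φ ∧ (∃ w ∈ D, φ w ≠ 0) ∧
    x = ‖φ z‖ ^ 2 / (apNorm n p D φ) ^ 2}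

open Metric in
/-- Local uniform bound on point evaluations. -/
lemma pointEval_bound (n : ℕ) (hn : n ≠ 0) (D : Set (Fin n → ℂ))
    (hD : IsOpen D) (p : ℝ) (hp : 0 < p) (z₀ : Fin n → ℂ) (hz₀ : z₀ ∈ D) :
    ∃ C r : ℝ, 0 ≤ C ∧ 0 < r ∧ ball z₀ r ⊆ D ∧ ∀ φ, MemAp n p D φ →
      ∀ z ∈ ball z₀ r, ‖φ z‖ ≤ C * apNorm n p D φ := by
  obtain ⟨R, hR, hRD⟩ := Metric.nhds_basis_closedBall.mem_iff.1 (hD.mem_nhds hz₀)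
  set N : ℕ := Module.finrank ℝ (Fin n → ℂ) with hN
  have hNpos : 0 < N := by
    haveI : Nonempty (Fin n) := ⟨⟨0, Nat.pos_of_ne_zero hn⟩⟩
    exact Module.finrank_pos
  set α : ℝ := N / p with hα
  have hαpos : 0 < α := by positivity
  set K : ℝ := 2 ^ α with hK
  have hKpos : 0 < K := by positivity
  set V : ℝ := (volume : Measure (Fin n → ℂ)).real (ball 0 1) with hV
  have hVpos : 0 < V := by
    refine ENNReal.toReal_pos (measure_ball_pos _ _ one_pos).ne' measure_ball_lt_top.ne
  set c : ℝ := (1 / 2) ^ p * (1 / (4 * (K + 1))) ^ N * V with hc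
  have hcpos : 0 < c := by positivity
  have hhalf : 0 < (R / 2) ^ α := by positivity
  refine ⟨(1 / c) ^ (1 / p) / (R / 2) ^ α, R / 2, by positivity, by positivity,
    (ball_subset_closedBall.trans (closedBall_subset_closedBall (by linarith))).trans hRD, ?_⟩
  intro φ ⟨hφd, hφi⟩ z hz
  set I : ℝ := ∫ z in D, ‖φ z‖ ^ p with hI
  have hI0 : 0 ≤ I := integral_nonneg fun z => by positivity
  have hA : apNorm n p D φ = I ^ (1 / p) := rfl
  set g : (Fin n → ℂ) → ℝ := fun z => ‖φ z‖ * (R - dist z z₀) ^ α with hg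
  have hgc : ContinuousOn g (closedBall z₀ R) := by
    refine ((hφd.continuousOn.mono hRD).norm).mul ?_
    refine ContinuousOn.rpow_const (by fun_prop) ?_
    intro x _; exact Or.inr hαpos.le
  obtain ⟨a, haR, hamax⟩ := (isCompact_closedBall z₀ R).exists_isMaxOn
    ⟨z₀, mem_closedBall_self hR.le⟩ hgc
  -- main claim
  have key : g a ≤ (1 / c) ^ (1 / p) * I ^ (1 / p) := by
    by_cases hga : g a = 0
    · rw [hga]; positivity
    have hda : dist a z₀ < R := by
      refine lt_of_le_of_ne haR fun h => hga ?_
      simp [hg, h, Real.zero_rpow hαpos.ne']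
    have hφa : 0 < ‖φ a‖ := by
      refine norm_pos_iff.2 fun h => hga ?_
      simp [hg, h]
    set d : ℝ := (R - dist a z₀) / 2 with hd
    have hdpos : 0 < d := by rw [hd]; linarith
    have h2d : R - dist a z₀ = 2 * d := by rw [hd]; ring
    have hsub : ∀ z ∈ ball a d, dist z z₀ ≤ R - d := fun z hz => by
      have := dist_triangle z a z₀
      have := mem_ball.1 hz
      linarith
    have hbR : ball a d ⊆ closedBall z₀ R := fun z hz => by
      have := hsub z hz
      exact mem_closedBall.2 (by linarith)
    have hb1 : ∀ z ∈ ball a d, ‖φ z‖ ≤ K * ‖φ a‖ := fun z hz => by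
      have h1 : g z ≤ g a := hamax (hbR hz)
      have h2 : ‖φ z‖ * d ^ α ≤ g z := by
        have := hsub z hz
        have : d ≤ R - dist z z₀ := by linarith
        simp only [hg]
        gcongr
      have h3 : g a = K * ‖φ a‖ * d ^ α := by
        simp only [hg]
        rw [h2d, Real.mul_rpow (by norm_num) hdpos.le]
        ring
      have hdα : 0 < d ^ α := by positivity
      exact le_of_mul_le_mul_right (h2.trans (h1.trans h3.le)) hdα
    have hmaps : Set.MapsTo φ (ball a d) (closedBall (φ a) ((K + 1) * ‖φ a‖)) := fun z hz => by
      rw [mem_closedBall, dist_eq_norm]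
      have := norm_sub_le (φ z) (φ a)
      have := hb1 z hz
      linarith
    set ρ : ℝ := d / (2 * (K + 1)) with hρ
    have hρpos : 0 < ρ := by positivity
    have hρd : ρ ≤ d := by
      rw [hρ]; exact div_le_self hdpos.le (by linarith)
    have hlow : ∀ z ∈ ball a ρ, (‖φ a‖ / 2) ^ p ≤ ‖φ z‖ ^ p := fun z hz => by
      have hzd : z ∈ ball a d := ball_subset_ball hρd hz
      have h1 := Complex.dist_le_div_mul_dist_of_mapsTo_ball
        (hφd.mono (hbR.trans hRD)) hmaps hzd
      have h2 : (K + 1) * ‖φ a‖ / d * dist z a ≤ (K + 1) * ‖φ a‖ / d * ρ := by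
        have := (mem_ball.1 hz).le
        gcongr
      have h3 : (K + 1) * ‖φ a‖ / d * ρ = ‖φ a‖ / 2 := by
        rw [hρ]; field_simp
      have h4 : ‖φ a‖ - ‖φ z‖ ≤ dist (φ z) (φ a) := by
        rw [dist_comm, dist_eq_norm]; exact norm_sub_norm_le _ _
      have : ‖φ a‖ / 2 ≤ ‖φ z‖ := by linarith
      gcongr
    have hρD : ball a ρ ⊆ D := (ball_subset_ball hρd).trans (hbR.trans hRD)
    have hint : (‖φ a‖ / 2) ^ p * (volume : Measure (Fin n → ℂ)).real (ball a ρ) ≤ I := by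
      refine (setIntegral_ge_of_const_le_real measurableSet_ball measure_ball_lt_top.ne hlow
        (hφi.mono_set hρD)).trans ?_
      exact setIntegral_mono_set hφi (Filter.Eventually.of_forall fun z => by positivity)
        hρD.eventuallyLE
    have hvol : (volume : Measure (Fin n → ℂ)).real (ball a ρ) = ρ ^ N * V := by
      rw [hV, measureReal_def, Measure.addHaar_ball_of_pos _ _ hρpos, ENNReal.toReal_mul,
        ENNReal.toReal_ofReal (by positivity), measureReal_def]
    have hgp : (g a) ^ p * c = (‖φ a‖ / 2) ^ p * (ρ ^ N * V) := by
      have h1 : (g a) ^ p = ‖φ a‖ ^ p * (2 * d) ^ N := by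
        simp only [hg]
        rw [h2d, Real.mul_rpow hφa.le (by positivity), ← Real.rpow_mul (by positivity), hα,
          div_mul_cancel₀ _ hp.ne', Real.rpow_natCast]
      have h2 : ρ = (2 * d) * (1 / (4 * (K + 1))) := by
        rw [hρ]; field_simp; norm_num
      rw [h1, h2, hc, mul_pow (2 * d), div_eq_mul_one_div ‖φ a‖ 2,
        Real.mul_rpow hφa.le (by norm_num)]
      ring
    have hga0 : 0 ≤ g a := by
      simp only [hg]; rw [h2d]; positivity
    have hfin : (g a) ^ p ≤ 1 / c * I := by
      rw [one_div_mul_eq_div, le_div_iff₀ hcpos, hgp, ← hvol]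
      exact hint
    rw [← Real.mul_rpow (by positivity) hI0]
    calc g a = ((g a) ^ p) ^ (1 / p) := by
          rw [← Real.rpow_mul hga0, mul_one_div_cancel hp.ne', Real.rpow_one]
      _ ≤ _ := by gcongr
  have hzR : z ∈ closedBall z₀ R := by
    have := mem_ball.1 hz
    exact mem_closedBall.2 (by linarith)
  have h1 : ‖φ z‖ * (R / 2) ^ α ≤ g z := by
    have := mem_ball.1 hz
    have : R / 2 ≤ R - dist z z₀ := by linarith
    simp only [hg]
    gcongr
  rw [hA, div_mul_eq_mul_div, le_div_iff₀ hhalf]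
  exact h1.trans ((hamax hzR).trans key)

/-- For a bounded domain `D ⊆ ℂⁿ` and `p > 0`, the `p`-Bergman kernel
is a continuous function on `D`. -/
theorem pBergman_continuous (n : ℕ) (D : Set (Fin n → ℂ))
    (hD : IsOpen D) (hDc : IsConnected D) (hDb : Bornology.IsBounded D)
    (p : ℝ) (hp : 0 < p) :
    ContinuousOn (pBergman n p D) D := by
  classical
  rcases eq_or_ne n 0 with rfl | hn
  · exact (Set.subsingleton_of_subsingleton (s := D)).continuousOn _
  intro z₀ hz₀
  refine ContinuousAt.continuousWithinAt ?_
  obtain ⟨C, r, hC, hr, hrD, hb⟩ := pointEval_bound n hn D hD p hp z₀ hz₀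
  set L : ℝ := 4 * C ^ 2 / r with hL
  have hL0 : 0 ≤ L := by positivity
  have hz₀r : z₀ ∈ Metric.ball z₀ r := Metric.mem_ball_self hr
  have hA0 : ∀ φ, 0 ≤ apNorm n p D φ := fun φ =>
    Real.rpow_nonneg (integral_nonneg fun z => by positivity) _
  have hbd : ∀ φ, MemAp n p D φ → ∀ z ∈ Metric.ball z₀ r,
      ‖φ z‖ ^ 2 / (apNorm n p D φ) ^ 2 ≤ C ^ 2 := by
    intro φ hφ z hz
    refine div_le_of_le_mul₀ (by positivity) (by positivity) ?_
    rw [← mul_pow]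
    have := hb φ hφ z hz
    gcongr
  have hlip : ∀ φ, MemAp n p D φ → ∀ z ∈ Metric.ball z₀ r,
      |‖φ z‖ ^ 2 / (apNorm n p D φ) ^ 2 - ‖φ z₀‖ ^ 2 / (apNorm n p D φ) ^ 2|
        ≤ L * dist z z₀ := by
    intro φ hφ z hz
    set A := apNorm n p D φ with hA
    have hA0' : 0 ≤ A := hA0 φ
    have h0 := hb φ hφ z₀ hz₀r
    have h1 := hb φ hφ z hz
    have hmaps : Set.MapsTo φ (Metric.ball z₀ r) (Metric.closedBall (φ z₀) (2 * (C * A))) := by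
      intro w hw
      rw [Metric.mem_closedBall, dist_eq_norm]
      have := norm_sub_le (φ w) (φ z₀)
      have := hb φ hφ w hw
      linarith
    have h2 := Complex.dist_le_div_mul_dist_of_mapsTo_ball (hφ.1.mono hrD) hmaps hz
    have h3 : |‖φ z‖ - ‖φ z₀‖| ≤ 2 * (C * A) / r * dist z z₀ := by
      refine le_trans ?_ h2
      rw [dist_eq_norm]; exact abs_norm_sub_norm_le _ _
    rw [← sub_div, abs_div, abs_of_nonneg (sq_nonneg A)]
    refine div_le_of_le_mul₀ (by positivity) (by positivity) ?_
    have h4 : ‖φ z‖ ^ 2 - ‖φ z₀‖ ^ 2 = (‖φ z‖ + ‖φ z₀‖) * (‖φ z‖ - ‖φ z₀‖) := by ring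
    rw [h4, abs_mul, abs_of_nonneg (by positivity : 0 ≤ ‖φ z‖ + ‖φ z₀‖)]
    calc (‖φ z‖ + ‖φ z₀‖) * |‖φ z‖ - ‖φ z₀‖|
        ≤ (2 * (C * A)) * (2 * (C * A) / r * dist z z₀) := by
          gcongr
          linarith
      _ = L * dist z z₀ * A ^ 2 := by rw [hL]; ring
  have hone : ∀ z ∈ Metric.ball z₀ r, ∀ w ∈ Metric.ball z₀ r,
      (∀ φ, MemAp n p D φ → ‖φ z‖ ^ 2 / (apNorm n p D φ) ^ 2
        ≤ ‖φ w‖ ^ 2 / (apNorm n p D φ) ^ 2 + L * dist z z₀ + L * dist w z₀) →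
      pBergman n p D z ≤ pBergman n p D w + L * dist z z₀ + L * dist w z₀ := by
    intro z hz w hw h
    have hw0 : 0 ≤ pBergman n p D w := by
      refine Real.sSup_nonneg ?_
      rintro x ⟨φ, _, _, rfl⟩
      positivity
    refine Real.sSup_le ?_ (by positivity)
    rintro x ⟨φ, hφ, hne, rfl⟩
    have h5 : ‖φ w‖ ^ 2 / (apNorm n p D φ) ^ 2 ≤ pBergman n p D w := by
      refine le_csSup ⟨C ^ 2, ?_⟩ ⟨φ, hφ, hne, rfl⟩
      rintro x ⟨ψ, hψ, _, rfl⟩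
      exact hbd ψ hψ w hw
    have := h φ hφ
    linarith
  have hfinal : ∀ z ∈ Metric.ball z₀ r,
      dist (pBergman n p D z) (pBergman n p D z₀) ≤ L * dist z z₀ := by
    intro z hz
    have h1 := hone z hz z₀ hz₀r fun φ hφ => by
      have := (abs_le.1 (hlip φ hφ z hz)).2
      simp only [dist_self, mul_zero]
      linarith
    have h2 := hone z₀ hz₀r z hz fun φ hφ => by
      have := (abs_le.1 (hlip φ hφ z hz)).1
      simp only [dist_self, mul_zero]
      linarith
    simp only [dist_self, mul_zero] at h1 h2
    rw [Real.dist_eq, abs_le]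
    constructor <;> linarith
  refine tendsto_iff_dist_tendsto_zero.2 ?_
  have hlim : Filter.Tendsto (fun z => L * dist z z₀) (nhds z₀) (nhds 0) := by
    have : Continuous fun z => L * dist z z₀ := by fun_prop
    simpa using this.tendsto z₀
  refine squeeze_zero' (Filter.Eventually.of_forall fun _ => dist_nonneg) ?_ hlim
  filter_upwards [Metric.ball_mem_nhds z₀ hr] with z hz using hfinal z hz
end

section
/- Let μ, ν be finite positive measures on sets M, N, let 0 < p < ∞ with p not an even integer, and let f ∈ L^p(M,μ), g ∈ L^p(N,ν) satisfy ∫_M |1 + αf|^p dμ = ∫_N |1 + αg|^p dν for all α ∈ ℂ. Then f and g are equimeasurable: for every nonnegative Borel function u : ℂ → ℝ, ∫_M u(f) dμ = ∫_N u(g) dν. -/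
open MeasureTheory

namespace RudinEq

open Filter Topology Asymptotics

/-- Coefficients of the iterated difference. -/
noncomputable def rc (m k : ℕ) : ℝ := (-1) ^ (m - k) * (m.choose k)

/-- Iterated difference of the function `‖z‖ ^ p`. -/
noncomputable def Ker (p : ℝ) (m : ℕ) (h z : ℂ) : ℝ :=
  ∑ k ∈ Finset.range (m + 1), rc m k * ‖z - k * h‖ ^ p

lemma rc_sum_pow {m j : ℕ} (h : j < m) :
    ∑ k ∈ Finset.range (m + 1), rc m k * (k : ℝ) ^ j = 0 := by
  have h1 := congrFun (fwdDiff_iter_pow_eq_zero_of_lt (R := ℝ) h) 0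
  rw [fwdDiff_iter_eq_sum_shift] at h1
  simpa [rc] using h1

lemma analytic_norm_rpow (p : ℝ) {z : ℂ} (hz : z ≠ 0) :
    AnalyticAt ℝ (fun w : ℂ => ‖w‖ ^ p) z := by
  have hre : AnalyticAt ℝ (fun w : ℂ => w.re) z := Complex.reCLM.analyticAt z
  have him : AnalyticAt ℝ (fun w : ℂ => w.im) z := Complex.imCLM.analyticAt z
  have hpos : 0 < z.re ^ 2 + z.im ^ 2 := by
    have := Complex.normSq_pos.2 hz
    rw [Complex.normSq_apply] at this
    nlinarith
  have hl : AnalyticAt ℝ (fun w : ℂ => Real.log (w.re ^ 2 + w.im ^ 2)) z :=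
    (analyticAt_log hpos).comp_of_eq ((hre.fun_pow 2).fun_add (him.fun_pow 2)) rfl
  have h2 : AnalyticAt ℝ (Real.exp ∘ fun w : ℂ => (p / 2) * Real.log (w.re ^ 2 + w.im ^ 2)) z :=
    (analyticAt_const.fun_mul hl).rexp
  refine h2.congr ?_
  filter_upwards [isOpen_ne.mem_nhds hz] with w hw
  have hw' : 0 < ‖w‖ := norm_pos_iff.2 hw
  have : w.re ^ 2 + w.im ^ 2 = ‖w‖ ^ 2 := by
    rw [Complex.sq_norm, Complex.normSq_apply]; ring
  simp only [Function.comp]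
  rw [this, Real.rpow_def_of_pos hw', Real.log_pow]
  congr 1
  push_cast
  ring

lemma diff_isBigO {F : ℂ → ℝ} (hF : AnalyticAt ℝ F 0) (m : ℕ) :
    (fun u : ℂ => ∑ k ∈ Finset.range (m + 1), rc m k * F (k * u)) =O[𝓝 0] fun u => ‖u‖ ^ m := by
  obtain ⟨q, hq⟩ := hF
  have hO := hq.isBigO_sub_partialSum_pow m
  have hk : ∀ k : ℕ, (fun u : ℂ => rc m k * (F (k * u) - q.partialSum m (k * u)))
      =O[𝓝 0] fun u => ‖u‖ ^ m := by
    intro k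
    have ht : Tendsto (fun u : ℂ => (k : ℂ) * u) (𝓝 0) (𝓝 0) := by
      have : Continuous (fun u : ℂ => (k : ℂ) * u) := by fun_prop
      simpa using this.tendsto 0
    have h1 := hO.comp_tendsto ht
    refine IsBigO.const_mul_left ?_ _
    simp only [zero_add] at h1
    refine h1.trans ?_
    refine IsBigO.of_bound ((k : ℝ) ^ m) (Eventually.of_forall fun u => ?_)
    simp [mul_pow]
  have hs := IsBigO.fun_sum (s := Finset.range (m + 1)) (fun k _ => hk k)
  refine hs.congr_left fun u => ?_
  have hz : ∑ k ∈ Finset.range (m + 1), rc m k * q.partialSum m (k * u) = 0 := by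
    have : ∀ k : ℕ, q.partialSum m (k * u)
        = ∑ j ∈ Finset.range m, (k : ℝ) ^ j * q j (fun _ => u) := by
      intro k
      unfold FormalMultilinearSeries.partialSum
      refine Finset.sum_congr rfl fun j _ => ?_
      have := (q j).map_smul_univ (fun _ => (k : ℝ)) (fun _ => u)
      simpa using this
    simp_rw [this, Finset.mul_sum]
    rw [Finset.sum_comm]
    refine Finset.sum_eq_zero fun j hj => ?_
    simp_rw [← mul_assoc]
    rw [← Finset.sum_mul, rc_sum_pow (Finset.mem_range.1 hj), zero_mul]
  simp only [mul_sub, Finset.sum_sub_distrib]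
  rw [hz, sub_zero]

lemma continuous_Ker {p : ℝ} (hp : 0 < p) (m : ℕ) (h : ℂ) : Continuous (Ker p m h) := by
  unfold Ker
  refine continuous_finsetSum _ fun k _ => continuous_const.mul ?_
  exact Continuous.rpow_const (by fun_prop) (fun _ => Or.inr hp.le)

lemma integrable_Ker {p : ℝ} (hp : 0 < p) {m : ℕ} (hm : p + 2 < m) (h : ℂ) :
    Integrable (Ker p m h) := by
  have hF : AnalyticAt ℝ (fun u : ℂ => ‖1 - u * h‖ ^ p) 0 := by
    have h1 : AnalyticAt ℝ (fun u : ℂ => 1 - u * h) 0 :=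
      analyticAt_const.fun_sub (analyticAt_id.fun_mul analyticAt_const)
    exact (analytic_norm_rpow p (z := 1) one_ne_zero).comp_of_eq h1 (by simp)
  have hO := (diff_isBigO hF m).comp_tendsto (Filter.tendsto_inv₀_cobounded (α := ℂ))
  have hcc : Bornology.cobounded ℂ = cocompact ℂ := Metric.cobounded_eq_cocompact
  have hne : ∀ᶠ z : ℂ in Bornology.cobounded ℂ, 1 ≤ ‖z‖ :=
    tendsto_norm_cobounded_atTop.eventually_ge_atTop 1
  have hO2 : Ker p m h =O[Bornology.cobounded ℂ] fun z => (1 + ‖z‖) ^ (-((m : ℝ) - p)) := by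
    have h1 : (fun z : ℂ => ‖z‖ ^ p * (‖z‖⁻¹) ^ m) =O[Bornology.cobounded ℂ]
        fun z => (1 + ‖z‖) ^ (-((m : ℝ) - p)) := by
      refine IsBigO.of_bound (2 ^ ((m : ℝ) - p)) ?_
      filter_upwards [hne] with z hz
      have h0 : 0 < ‖z‖ := by linarith
      rw [Real.norm_of_nonneg (by positivity), Real.norm_of_nonneg (by positivity)]
      have e : ‖z‖ ^ p * (‖z‖⁻¹) ^ m = ‖z‖ ^ (-((m : ℝ) - p)) := by
        rw [neg_sub, Real.rpow_sub h0, Real.rpow_natCast, inv_pow, div_eq_mul_inv]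
      rw [e]
      have e2 : (2 : ℝ) ^ ((m : ℝ) - p) * (1 + ‖z‖) ^ (-((m : ℝ) - p))
          = ((1 + ‖z‖) / 2) ^ (-((m : ℝ) - p)) := by
        rw [Real.div_rpow (by positivity) (by norm_num), Real.rpow_neg (x := 2) (by norm_num)]
        field_simp
      rw [e2]
      exact Real.rpow_le_rpow_of_nonpos (by positivity) (by linarith) (by linarith)
    refine IsBigO.trans ?_ h1
    have h2 := (isBigO_refl (fun z : ℂ => ‖z‖ ^ p) (Bornology.cobounded ℂ)).mul hO
    refine (h2.congr' ?_ ?_)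
    · filter_upwards [hne] with z hz
      have h0 : 0 < ‖z‖ := by linarith
      have hz0 : z ≠ 0 := norm_pos_iff.1 h0
      simp only [Function.comp, Ker, Finset.mul_sum]
      refine Finset.sum_congr rfl fun k _ => ?_
      have : z - k * h = z * (1 - k * z⁻¹ * h) := by field_simp
      rw [this, norm_mul, Real.mul_rpow (norm_nonneg _) (norm_nonneg _)]
      ring
    · filter_upwards with z
      simp
  rw [hcc] at hO2
  refine (continuous_Ker hp m h).locallyIntegrable.integrable_of_isBigO_cocompact hO2 ?_
  refine (integrable_one_add_norm ?_).integrableAtFilter _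
  rw [Complex.finrank_real_complex]
  push_cast
  linarith

lemma exists_Ker_ne {p : ℝ} (hpe : ∀ k : ℕ, p ≠ 2 * k) (m : ℕ)
    (h0 : ∀ z, Ker p m 1 z = 0) : False := by
  have hc0 : rc m 0 ≠ 0 := by simp [rc]
  have hA : AnalyticAt ℝ (fun x : ℝ =>
      -(rc m 0)⁻¹ * ∑ k ∈ Finset.range m, rc m (k + 1) * ‖(x : ℂ) - ((k + 1 : ℕ) : ℂ)‖ ^ p) 0 := by
    refine analyticAt_const.fun_mul (Finset.analyticAt_fun_sum _ fun k _ => ?_)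
    refine analyticAt_const.fun_mul ?_
    have h1 : AnalyticAt ℝ (fun x : ℝ => (x : ℂ) - ((k + 1 : ℕ) : ℂ)) 0 :=
      (Complex.ofRealCLM.analyticAt 0).fun_sub analyticAt_const
    refine (analytic_norm_rpow p (z := -((k + 1 : ℕ) : ℂ)) ?_).comp_of_eq h1 (by simp)
    rw [neg_ne_zero]
    exact_mod_cast Nat.succ_ne_zero k
  have hB : AnalyticAt ℝ (fun x : ℝ => |x| ^ p) 0 := by
    refine hA.congr (Eventually.of_forall fun x => ?_)
    have := h0 (x : ℂ)
    unfold Ker at this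
    rw [Finset.sum_range_succ'] at this
    simp only [mul_one, Nat.cast_zero, sub_zero, Complex.norm_real, Real.norm_eq_abs] at this
    simp only
    rw [eq_neg_of_add_eq_zero_left this]
    field_simp
  have hnz : ¬ ∀ᶠ x : ℝ in 𝓝 0, |x| ^ p = 0 := by
    intro hh
    have h1 : ∀ᶠ x : ℝ in 𝓝[>] 0, |x| ^ p = 0 := hh.filter_mono nhdsWithin_le_nhds
    obtain ⟨x, hx, hx0⟩ := (h1.and self_mem_nhdsWithin).exists
    have hx0' : (0 : ℝ) < x := hx0
    have : 0 < |x| ^ p := by positivity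
    linarith
  obtain ⟨n, g, hg, hg0, hgn⟩ := hB.exists_eventuallyEq_pow_smul_nonzero_iff.2 hnz
  simp only [sub_zero, smul_eq_mul] at hgn
  have hgr : Tendsto g (𝓝[>] 0) (𝓝 (g 0)) := hg.continuousAt.tendsto.mono_left nhdsWithin_le_nhds
  have hgr' : Tendsto (fun x => g (-x)) (𝓝[>] 0) (𝓝 (g 0)) := by
    have : Tendsto (fun x : ℝ => -x) (𝓝 0) (𝓝 0) := by simpa using (continuous_neg (G := ℝ)).tendsto 0
    exact (hg.continuousAt.tendsto.comp this).mono_left nhdsWithin_le_nhds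
  have hgn' : ∀ᶠ x : ℝ in 𝓝 0, |-x| ^ p = (-x) ^ n * g (-x) := by
    have : Tendsto (fun x : ℝ => -x) (𝓝 0) (𝓝 0) := by simpa using (continuous_neg (G := ℝ)).tendsto 0
    exact this.eventually hgn
  have e1 : ∀ᶠ x : ℝ in 𝓝[>] 0, x ^ (p - n) = g x := by
    filter_upwards [hgn.filter_mono nhdsWithin_le_nhds, self_mem_nhdsWithin] with x hx hx0
    have hx0' : (0 : ℝ) < x := hx0
    rw [abs_of_pos hx0'] at hx
    rw [Real.rpow_sub hx0', Real.rpow_natCast, hx]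
    field_simp
  have e2 : ∀ᶠ x : ℝ in 𝓝[>] 0, (-1) ^ n * x ^ (p - n) = g (-x) := by
    filter_upwards [hgn'.filter_mono nhdsWithin_le_nhds, self_mem_nhdsWithin] with x hx hx0
    have hx0' : (0 : ℝ) < x := hx0
    rw [abs_neg, abs_of_pos hx0', neg_pow] at hx
    rw [Real.rpow_sub hx0', Real.rpow_natCast, hx]
    have : ((-1 : ℝ) ^ n) * (-1) ^ n = 1 := by rw [← mul_pow]; simp
    field_simp
    linear_combination g (-x) * this
  have t1 : Tendsto (fun x : ℝ => x ^ (p - n)) (𝓝[>] 0) (𝓝 (g 0)) := hgr.congr' (e1.mono fun _ h => h.symm)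
  have t2 : Tendsto (fun x : ℝ => (-1) ^ n * x ^ (p - n)) (𝓝[>] 0) (𝓝 (g 0)) :=
    hgr'.congr' (e2.mono fun _ h => h.symm)
  have hn : Even n := by
    rcases Nat.even_or_odd n with h | h
    · exact h
    · exfalso
      have h3 := tendsto_nhds_unique t2 (t1.const_mul ((-1) ^ n))
      rw [h.neg_one_pow] at h3
      apply hg0
      linarith
  have hpn : p = n := by
    rcases lt_trichotomy (p - n) 0 with h | h | h
    · exfalso
      exact not_tendsto_nhds_of_tendsto_atTop (tendsto_rpow_neg_nhdsGT_zero h) _ t1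
    · linarith
    · exfalso
      have : Tendsto (fun x : ℝ => x ^ (p - n)) (𝓝[>] 0) (𝓝 0) := by
        have h4 := (Real.continuousAt_rpow_const 0 (p - n) (Or.inr h.le)).tendsto
        rw [Real.zero_rpow h.ne'] at h4
        exact h4.mono_left nhdsWithin_le_nhds
      exact hg0 (tendsto_nhds_unique t1 this)
  obtain ⟨k, rfl⟩ := hn
  apply hpe k
  rw [hpn]
  push_cast
  ring

/-- Fourier-type integral of the kernel. -/
noncomputable def J (p : ℝ) (m : ℕ) (h t : ℂ) : ℂ :=
  ∫ v : ℂ, Complex.exp ((inner ℝ v t : ℝ) * Complex.I) * (Ker p m h v : ℂ)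

lemma Ker_scale (p : ℝ) (m : ℕ) (h l v : ℂ) : Ker p m (l * h) (l * v) = ‖l‖ ^ p * Ker p m h v := by
  simp only [Ker, Finset.mul_sum]
  refine Finset.sum_congr rfl fun k _ => ?_
  have : l * v - k * (l * h) = l * (v - k * h) := by ring
  rw [this, norm_mul, Real.mul_rpow (norm_nonneg _) (norm_nonneg _)]
  ring

lemma inner_scale (l v t : ℂ) : inner ℝ (l * v) t = inner ℝ v (starRingEnd ℂ l * t) := by
  simp only [Complex.inner, map_mul, Complex.mul_re, Complex.mul_im, Complex.conj_re, Complex.conj_im]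
  ring

lemma J_scale {p : ℝ} (hp : 0 < p) (m : ℕ) {h l t : ℂ} (hl : l ≠ 0) (hJ : J p m (l * h) t = 0) :
    J p m h (starRingEnd ℂ l * t) = 0 := by
  set F : ℂ → ℂ := fun v => Complex.exp ((inner ℝ v t : ℝ) * Complex.I) * (Ker p m (l * h) v : ℂ)
    with hF
  have hFc : Continuous F := by
    have := continuous_Ker hp m (l * h)
    fun_prop
  set L : ℂ →ₗ[ℝ] ℂ := Algebra.lmul ℝ ℂ l with hL
  have hdet : LinearMap.det L ≠ 0 := by
    have : IsUnit L := (IsUnit.mk0 l hl).map (Algebra.lmul ℝ ℂ)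
    exact (this.map LinearMap.det).ne_zero
  have hmap := Measure.map_linearMap_addHaar_eq_smul_addHaar (volume : Measure ℂ) hdet
  have hLc : Continuous L := L.continuous_of_finiteDimensional
  have h1 : ∫ v, F (L v) = 0 := by
    rw [← integral_map (f := F) hLc.measurable.aemeasurable hFc.aestronglyMeasurable, hmap,
      integral_smul_measure]
    have : ∫ v, F v = 0 := hJ
    rw [this, smul_zero]
  have h2 : ∀ v, F (L v) = ((‖l‖ ^ p : ℝ) : ℂ) *
      (Complex.exp ((inner ℝ v (starRingEnd ℂ l * t) : ℝ) * Complex.I) * (Ker p m h v : ℂ)) := by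
    intro v
    have : L v = l * v := rfl
    simp only [hF]
    rw [this, Ker_scale, inner_scale]
    push_cast
    ring
  simp_rw [h2] at h1
  rw [integral_const_mul] at h1
  have hne : ((‖l‖ ^ p : ℝ) : ℂ) ≠ 0 := by
    have : 0 < ‖l‖ ^ p := Real.rpow_pos_of_pos (norm_pos_iff.2 hl) _
    exact_mod_cast this.ne'
  exact (mul_eq_zero.1 h1).resolve_left hne

lemma exists_J_ne {p : ℝ} (hp : 0 < p) (hpe : ∀ k : ℕ, p ≠ 2 * k) {m : ℕ} (hm : p + 2 < m)
    {t : ℂ} (ht : t ≠ 0) : ∃ h, J p m h t ≠ 0 := by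
  by_contra! hall
  have hJ : ∀ h s, s ≠ 0 → J p m h s = 0 := by
    intro h s hs
    have hl : starRingEnd ℂ (s / t) ≠ 0 := by
      rw [Ne, map_eq_zero]; exact div_ne_zero hs ht
    have := J_scale hp m (h := h) (t := t) hl (hall _)
    rw [Complex.conj_conj, div_mul_cancel₀ _ ht] at this
    exact this
  refine exists_Ker_ne hpe m fun z => ?_
  set f : ℂ → ℂ := fun v => (Ker p m 1 v : ℂ) with hf
  have hfc : Continuous f := Complex.continuous_ofReal.comp (continuous_Ker hp m 1)
  have hfi : Integrable f := (integrable_Ker hp hm 1).ofReal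
  have h0 : ∀ w : ℂ, w ≠ 0 → FourierTransform.fourier f w = 0 := by
    intro w hw
    rw [Real.fourier_eq']
    have := hJ 1 ((-2 * Real.pi : ℝ) • w) (smul_ne_zero (by simp [Real.pi_ne_zero]) hw)
    unfold J at this
    simp only [inner_smul_right] at this
    simpa [hf] using this
  have hae : FourierTransform.fourier f =ᵐ[volume] 0 := by
    have : ∀ᵐ w : ℂ, w ≠ 0 := by simp [ae_iff]
    filter_upwards [this] with w hw using h0 w hw
  have hinv := hfc.fourierInv_fourier_eq hfi ((integrable_zero _ _ _).congr hae.symm)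
  have h3 := congrFun hinv z
  rw [Real.fourierInv_eq'] at h3
  have h4 : ∫ v : ℂ, Complex.exp (((2 * Real.pi * inner ℝ v z : ℝ) : ℂ) * Complex.I) •
      FourierTransform.fourier f v = 0 := by
    refine integral_eq_zero_of_ae ?_
    filter_upwards [hae] with w hw
    rw [hw]; simp
  rw [h4] at h3
  simpa [hf] using h3.symm

lemma conv_eq {p : ℝ} (hp : 0 < p) {m : ℕ} (hm : p + 2 < m) (h t : ℂ)
    (μ : Measure ℂ) [IsFiniteMeasure μ] :
    ∫ w : ℂ, Complex.exp ((inner ℝ w t : ℝ) * Complex.I) * ((∫ z, Ker p m h (w - z) ∂μ : ℝ) : ℂ)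
      = charFun μ t * J p m h t := by
  have hK := continuous_Ker hp m h
  have hKi := integrable_Ker hp hm h
  have hnorm : ∀ w s : ℂ, ‖Complex.exp ((inner ℝ w s : ℝ) * Complex.I)‖ = 1 := fun w s =>
    Complex.norm_exp_ofReal_mul_I _
  have hint : Integrable (Function.uncurry fun z w : ℂ =>
      Complex.exp ((inner ℝ w t : ℝ) * Complex.I) * (Ker p m h (w - z) : ℂ)) (μ.prod volume) := by
    have hc : Continuous (Function.uncurry fun z w : ℂ =>
      Complex.exp ((inner ℝ w t : ℝ) * Complex.I) * (Ker p m h (w - z) : ℂ)) := by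
      simp only [Function.uncurry_def]
      fun_prop
    rw [integrable_prod_iff hc.aestronglyMeasurable]
    constructor
    · refine Eventually.of_forall fun z => ?_
      refine ((hKi.comp_sub_right z).norm).mono' ?_ ?_
      · have : Continuous fun w : ℂ =>
          Complex.exp ((inner ℝ w t : ℝ) * Complex.I) * (Ker p m h (w - z) : ℂ) := by fun_prop
        exact this.aestronglyMeasurable
      · refine Eventually.of_forall fun w => ?_
        simp only [Function.uncurry]
        rw [norm_mul, hnorm, one_mul, Complex.norm_real]
    · have : ∀ z : ℂ, ∫ w : ℂ, ‖Function.uncurry (fun z w : ℂ =>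
          Complex.exp ((inner ℝ w t : ℝ) * Complex.I) * (Ker p m h (w - z) : ℂ)) (z, w)‖
          = ∫ w : ℂ, ‖Ker p m h w‖ := by
        intro z
        rw [← integral_sub_right_eq_self (fun w => ‖Ker p m h w‖) z]
        refine integral_congr_ae (Eventually.of_forall fun w => ?_)
        simp only [Function.uncurry]
        rw [norm_mul, hnorm, one_mul, Complex.norm_real]
      simp_rw [this]
      exact integrable_const _
  have hsw := integral_integral_swap hint
  have hR : ∀ w : ℂ, ∫ z, Complex.exp ((inner ℝ w t : ℝ) * Complex.I) * (Ker p m h (w - z) : ℂ) ∂μ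
      = Complex.exp ((inner ℝ w t : ℝ) * Complex.I) * ((∫ z, Ker p m h (w - z) ∂μ : ℝ) : ℂ) := by
    intro w
    rw [integral_const_mul, integral_complex_ofReal]
  have hL : ∀ z : ℂ, ∫ w, Complex.exp ((inner ℝ w t : ℝ) * Complex.I) * (Ker p m h (w - z) : ℂ)
      = Complex.exp ((inner ℝ z t : ℝ) * Complex.I) * J p m h t := by
    intro z
    unfold J
    rw [← integral_const_mul, ← integral_sub_right_eq_self (fun v : ℂ => Complex.exp ((inner ℝ z t : ℝ) * Complex.I) *
      (Complex.exp ((inner ℝ v t : ℝ) * Complex.I) * (Ker p m h v : ℂ))) z]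
    refine integral_congr_ae (Eventually.of_forall fun w => ?_)
    simp only
    rw [← mul_assoc, ← Complex.exp_add]
    congr 2
    rw [inner_sub_left]
    push_cast
    ring
  simp_rw [hR, hL] at hsw
  rw [← hsw, integral_mul_const, charFun_apply]

lemma integrable_shift {p : ℝ} (hp : 0 < p) (μ : Measure ℂ) [IsFiniteMeasure μ]
    (hi : Integrable (fun z => ‖z‖ ^ p) μ) (w : ℂ) : Integrable (fun z => ‖w - z‖ ^ p) μ := by
  have h0 : ENNReal.ofReal p ≠ 0 := by simpa using hp
  have ht : ENNReal.ofReal p ≠ ⊤ := ENNReal.ofReal_ne_top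
  have hpp : (ENNReal.ofReal p).toReal = p := ENNReal.toReal_ofReal hp.le
  have h1 : MemLp (fun z : ℂ => z) (ENNReal.ofReal p) μ := by
    rw [← integrable_norm_rpow_iff (by fun_prop) h0 ht, hpp]
    exact hi
  have h2 := ((memLp_const w).sub h1).integrable_norm_rpow h0 ht
  rw [hpp] at h2
  exact h2

theorem measure_eq {p : ℝ} (hp : 0 < p) (hpe : ∀ k : ℕ, p ≠ 2 * k)
    (μ ν : Measure ℂ) [IsFiniteMeasure μ] [IsFiniteMeasure ν]
    (hμ : Integrable (fun z => ‖z‖ ^ p) μ) (hν : Integrable (fun z => ‖z‖ ^ p) ν)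
    (heq : ∀ α : ℂ, ∫ z, ‖1 + α * z‖ ^ p ∂μ = ∫ z, ‖1 + α * z‖ ^ p ∂ν) : μ = ν := by
  obtain ⟨m, hm⟩ := exists_nat_gt (p + 2)
  have hsh : ∀ w : ℂ, w ≠ 0 → ∫ z, ‖w - z‖ ^ p ∂μ = ∫ z, ‖w - z‖ ^ p ∂ν := by
    intro w hw
    have : ∀ z : ℂ, ‖w - z‖ ^ p = ‖w‖ ^ p * ‖1 + (-w⁻¹) * z‖ ^ p := by
      intro z
      rw [← Real.mul_rpow (norm_nonneg _) (norm_nonneg _), ← norm_mul]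
      congr 2
      field_simp
      ring
    simp_rw [this]
    rw [integral_const_mul, integral_const_mul, heq]
  refine Measure.ext_of_charFun (funext fun t => ?_)
  by_cases ht : t = 0
  · subst ht
    have := heq 0
    simp only [zero_mul, add_zero, norm_one, Real.one_rpow, integral_const, smul_eq_mul, mul_one]
      at this
    simp [charFun_zero, this]
  obtain ⟨h, hJ⟩ := exists_J_ne hp hpe hm ht
  refine mul_right_cancel₀ hJ ?_
  rw [← conv_eq hp hm, ← conv_eq hp hm]
  have hae : ∀ᵐ w : ℂ, ∀ k : ℕ, w ≠ k * h := by
    rw [ae_all_iff]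
    intro k
    simp [ae_iff]
  refine integral_congr_ae ?_
  filter_upwards [hae] with w hw
  congr 2
  have hexp : ∀ (ρ : Measure ℂ) [IsFiniteMeasure ρ], Integrable (fun z => ‖z‖ ^ p) ρ →
      ∫ z, Ker p m h (w - z) ∂ρ =
        ∑ k ∈ Finset.range (m + 1), rc m k * ∫ z, ‖(w - k * h) - z‖ ^ p ∂ρ := by
    intro ρ _ hρ
    have : ∀ z, Ker p m h (w - z)
        = ∑ k ∈ Finset.range (m + 1), rc m k * ‖(w - k * h) - z‖ ^ p := by
      intro z
      unfold Ker
      refine Finset.sum_congr rfl fun k _ => ?_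
      rw [sub_right_comm]
    simp_rw [this]
    rw [integral_finsetSum _ fun k _ => (integrable_shift hp ρ hρ _).const_mul _]
    simp_rw [integral_const_mul]
  rw [hexp μ hμ, hexp ν hν]
  refine Finset.sum_congr rfl fun k _ => ?_
  rw [hsh _ (sub_ne_zero.2 (hw k))]

end RudinEq

/-- Rudin's equimeasurability theorem (one-function case). -/
theorem rudin_equimeasurability {M N : Type*} [MeasurableSpace M] [MeasurableSpace N]
    (μ : Measure M) (ν : Measure N) [IsFiniteMeasure μ] [IsFiniteMeasure ν]
    (p : ℝ) (hp : 0 < p) (hpe : ∀ k : ℕ, p ≠ 2 * k)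
    (f : M → ℂ) (g : N → ℂ) (hf : Measurable f) (hg : Measurable g)
    (hfi : Integrable (fun x => ‖f x‖ ^ p) μ)
    (hgi : Integrable (fun y => ‖g y‖ ^ p) ν)
    (heq : ∀ α : ℂ, ∫ x, ‖1 + α * f x‖ ^ p ∂μ = ∫ y, ‖1 + α * g y‖ ^ p ∂ν) :
    ∀ u : ℂ → ENNReal, Measurable u →
      ∫⁻ x, u (f x) ∂μ = ∫⁻ y, u (g y) ∂ν := by
  intro u hu
  have key : μ.map f = ν.map g := by
    refine RudinEq.measure_eq hp hpe _ _ ?_ ?_ fun α => ?_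
    · exact (integrable_map_measure (Measurable.aestronglyMeasurable (by fun_prop)) hf.aemeasurable).2 hfi
    · exact (integrable_map_measure (Measurable.aestronglyMeasurable (by fun_prop)) hg.aemeasurable).2 hgi
    · rw [integral_map hf.aemeasurable (Measurable.aestronglyMeasurable (by fun_prop)), integral_map hg.aemeasurable (Measurable.aestronglyMeasurable (by fun_prop))]
      exact heq α
  rw [← lintegral_map hu hf, ← lintegral_map hu hg, key]
end

section
/- Let D₁ ⊂ ℂⁿ and D₂ ⊂ ℂᵐ be bounded domains, p > 0 not an even integer, and let φ₀,…,φ_N ∈ A^p(D₁), ψ₀,…,ψ_N ∈ A^p(D₂) with φ₀ ≢ 0 and ψ₀ ≢ 0. Suppose ‖φ₀ + Σₖ αₖφₖ‖_p = ‖ψ₀ + Σₖ αₖψₖ‖_p for all (α₁,…,α_N) ∈ ℂᴺ. Then for every nonnegative Borel function u : ℂᴺ → ℝ, ∫_{D₁} u(φ₁/φ₀,…,φ_N/φ₀)|φ₀|^p dλ_n = ∫_{D₂} u(ψ₁/ψ₀,…,ψ_N/ψ₀)|ψ₀|^p dλ_m. -/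
open MeasureTheory

noncomputable def rho : ℕ → ℝ → ℝ
  | 0 => Real.cos
  | (M + 1) => fun t => t ^ (2 * M) / (Nat.factorial (2 * M) : ℝ) - rho M t

/-- the first derivative of `rho (M+1)`. -/
noncomputable def rhod : ℕ → ℝ → ℝ
  | 0 => Real.sin
  | (M + 1) => fun t => t ^ (2 * M + 1) / (Nat.factorial (2 * M + 1) : ℝ) - rhod M t

lemma rhod_deriv (M : ℕ) (t : ℝ) : HasDerivAt (rhod M) (rho M t) t := by
  induction M with
  | zero => exact Real.hasDerivAt_sin t
  | succ M ih =>
    have h1 : HasDerivAt (fun t : ℝ => t ^ (2 * M + 1) / (Nat.factorial (2 * M + 1) : ℝ))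
        (t ^ (2 * M) / (Nat.factorial (2 * M) : ℝ)) t := by
      have := (hasDerivAt_pow (2 * M + 1) t).div_const (Nat.factorial (2 * M + 1) : ℝ)
      refine this.congr_deriv ?_
      rw [Nat.factorial_succ]
      have : ((Nat.factorial (2 * M)) : ℝ) ≠ 0 := by positivity
      push_cast
      field_simp
    exact h1.sub ih

lemma rho_deriv (M : ℕ) (t : ℝ) : HasDerivAt (rho (M + 1)) (rhod M t) t := by
  induction M with
  | zero =>
    have := (Real.hasDerivAt_cos t).const_sub 1
    simpa [rho, rhod] using this
  | succ M ih =>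
    have h1 : HasDerivAt (fun t : ℝ => t ^ (2 * (M + 1)) / (Nat.factorial (2 * (M + 1)) : ℝ))
        (t ^ (2 * M + 1) / (Nat.factorial (2 * M + 1) : ℝ)) t := by
      have := (hasDerivAt_pow (2 * M + 1 + 1) t).div_const (Nat.factorial (2 * M + 1 + 1) : ℝ)
      refine this.congr_deriv ?_
      rw [Nat.factorial_succ (2 * M + 1)]
      have : ((Nat.factorial (2 * M + 1)) : ℝ) ≠ 0 := by positivity
      push_cast
      field_simp
    exact h1.sub ih

lemma rhod_zero (M : ℕ) : rhod M 0 = 0 := by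
  induction M with
  | zero => simp [rhod]
  | succ M ih => simp [rhod, ih]

lemma rho_zero (M : ℕ) : rho (M + 1) 0 = 0 := by
  induction M with
  | zero => simp [rho]
  | succ M ih => 
    change (0:ℝ) ^ (2 * (M + 1)) / _ - rho (M + 1) 0 = 0
    rw [ih]; simp

lemma rho_even (M : ℕ) (t : ℝ) : rho M (-t) = rho M t := by
  induction M with
  | zero => simp [rho]
  | succ M ih => simp [rho, ih]

lemma rho_cont (M : ℕ) : Continuous (rho M) := by
  induction M with
  | zero => exact Real.continuous_cos
  | succ M ih => simp only [rho]; fun_prop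

lemma rhod_cont (M : ℕ) : Continuous (rhod M) :=
  continuous_iff_continuousAt.2 fun t => (rhod_deriv M t).continuousAt

lemma rho_nonneg' (M : ℕ) : ∀ t : ℝ, 0 ≤ t → 0 ≤ rho (M + 1) t := by
  induction M with
  | zero => intro t _; simp [rho, Real.cos_le_one]
  | succ M ih =>
    have h1 : MonotoneOn (rhod (M + 1)) (Set.Ici 0) := by
      apply monotoneOn_of_deriv_nonneg (convex_Ici 0) (rhod_cont _).continuousOn
        (fun x _ => (rhod_deriv _ x).differentiableAt.differentiableWithinAt)
      intro x hx
      rw [(rhod_deriv _ x).deriv]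
      rw [interior_Ici] at hx
      exact ih x (le_of_lt hx)
    have h2 : MonotoneOn (rho (M + 1 + 1)) (Set.Ici 0) := by
      apply monotoneOn_of_deriv_nonneg (convex_Ici 0) (rho_cont _).continuousOn
        (fun x _ => (rho_deriv _ x).differentiableAt.differentiableWithinAt)
      intro x hx
      rw [(rho_deriv _ x).deriv]
      rw [interior_Ici] at hx
      rw [← rhod_zero (M + 1)]
      exact h1 (Set.mem_Ici.2 le_rfl) (Set.mem_Ici.2 (le_of_lt hx)) (le_of_lt hx)
    intro t ht
    rw [← rho_zero (M + 1)]
    exact h2 (Set.mem_Ici.2 le_rfl) (Set.mem_Ici.2 ht) ht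

lemma rho_nonneg (M : ℕ) (t : ℝ) : 0 ≤ rho (M + 1) t := by
  rcases le_total 0 t with h | h
  · exact rho_nonneg' M t h
  · rw [← rho_even]; exact rho_nonneg' M _ (by linarith)

lemma rho_pos (M : ℕ) : ∀ t : ℝ, 0 < t → t < 1 → 0 < rho M t := by
  induction M with
  | zero =>
    intro t h0 h1
    exact Real.cos_pos_of_mem_Ioo ⟨by linarith [Real.pi_pos], by linarith [Real.pi_gt_three]⟩
  | succ M ih =>
    have h1 : StrictMonoOn (rhod M) (Set.Icc 0 1) := by
      apply strictMonoOn_of_deriv_pos (convex_Icc 0 1) (rhod_cont _).continuousOn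
      intro x hx
      rw [(rhod_deriv _ x).deriv]
      rw [interior_Icc] at hx
      exact ih x hx.1 hx.2
    have h2 : StrictMonoOn (rho (M + 1)) (Set.Icc 0 1) := by
      apply strictMonoOn_of_deriv_pos (convex_Icc 0 1) (rho_cont _).continuousOn
      intro x hx
      rw [(rho_deriv _ x).deriv]
      rw [interior_Icc] at hx
      rw [← rhod_zero M]
      exact h1 (by simp) ⟨hx.1.le, hx.2.le⟩ hx.1
    intro t ht ht1
    rw [← rho_zero M]
    exact h2 (by simp) ⟨ht.le, ht1.le⟩ ht

lemma rho_le1 (M : ℕ) (t : ℝ) : rho (M + 1) t ≤ |t| ^ (2 * (M + 1)) := by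
  have h := rho_nonneg (M + 1) t
  rw [rho] at h
  have h2 : t ^ (2 * (M + 1)) / (Nat.factorial (2 * (M + 1)) : ℝ) ≤ |t| ^ (2 * (M + 1)) := by
    rw [(even_two_mul (M + 1)).pow_abs]
    apply div_le_self ((even_two_mul (M + 1)).pow_nonneg t)
    exact_mod_cast Nat.succ_le_of_lt (Nat.factorial_pos _)
  linarith

lemma rho_le2 (M : ℕ) (t : ℝ) : rho (M + 1) t ≤ 2 * |t| ^ (2 * M) := by
  have h2 : t ^ (2 * M) / (Nat.factorial (2 * M) : ℝ) ≤ |t| ^ (2 * M) := by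
    rw [(even_two_mul M).pow_abs]
    apply div_le_self ((even_two_mul M).pow_nonneg t)
    exact_mod_cast Nat.succ_le_of_lt (Nat.factorial_pos _)
  rw [rho]
  cases M with
  | zero => simp [rho] at *; linarith [Real.neg_one_le_cos t]
  | succ M =>
    have := rho_nonneg M t
    have : 0 ≤ |t| ^ (2 * (M + 1)) := by positivity
    linarith

/-- coefficients of the central difference -/
noncomputable def cc (K l : ℕ) : ℝ := (-1) ^ l * ((2 * K).choose l : ℝ)

lemma cc_pow (K j : ℕ) (hj : j < K) (a b : ℝ) :
    ∑ l ∈ Finset.range (2 * K + 1), cc K l * (a + ((K : ℝ) - l) * b) ^ (2 * j) = 0 := by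
  let P : Polynomial ℝ := (Polynomial.C (a + K * b) - Polynomial.C b * Polynomial.X) ^ (2 * j)
  have hP : P.natDegree < 2 * K := by
    refine lt_of_le_of_lt (Polynomial.natDegree_pow_le) ?_
    have : (Polynomial.C (a + K * b) - Polynomial.C b * Polynomial.X).natDegree ≤ 1 := by
      compute_degree
    nlinarith
  have h := congrFun (Polynomial.fwdDiff_iter_eq_zero_of_degree_lt hP) 0
  rw [fwdDiff_iter_eq_sum_shift] at h
  rw [← show _ = (0 : ℝ) from h]
  apply Finset.sum_congr rfl
  intro l hl
  have hl' : l ≤ 2 * K := by simpa [Nat.lt_succ_iff] using hl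
  have h1 : ((-1 : ℝ)) ^ (2 * K - l) = (-1) ^ l := by
    have : (-1 : ℝ) ^ (2 * K - l) * (-1) ^ l = 1 := by
      rw [← pow_add, Nat.sub_add_cancel hl']; simp
    have h3 : ((-1 : ℝ) ^ l) * (-1) ^ l = 1 := by rw [← mul_pow]; simp
    have h4 : ((-1 : ℝ) ^ l) ≠ 0 := by positivity
    exact mul_right_cancel₀ h4 (this.trans h3.symm)
  simp only [P, cc, zsmul_eq_mul]
  push_cast
  rw [h1]
  simp
  left
  ring

lemma cc_cos (K : ℕ) (a b : ℝ) :
    ∑ l ∈ Finset.range (2 * K + 1), cc K l * Real.cos (a + ((K : ℝ) - l) * b) =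
      (2 * Real.cos b - 2) ^ K * Real.cos a := by
  have key : ∑ l ∈ Finset.range (2 * K + 1), (cc K l : ℂ) *
      Complex.exp (((a + ((K : ℝ) - l) * b : ℝ) : ℂ) * Complex.I) =
      (((2 * Real.cos b - 2) ^ K : ℝ) : ℂ) * Complex.exp ((a : ℂ) * Complex.I) := by
    have h1 : (((2 * Real.cos b - 2) ^ K : ℝ) : ℂ) =
        (-Complex.exp (-((b / 2 : ℂ) * Complex.I)) + Complex.exp ((b / 2 : ℂ) * Complex.I)) ^ (2 * K) := by
      rw [pow_mul]
      push_cast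
      congr 1
      rw [Complex.cos]
      have e1 : Complex.exp ((b : ℂ) * Complex.I) = Complex.exp ((b / 2 : ℂ) * Complex.I) ^ 2 := by
        rw [← Complex.exp_nat_mul]; congr 1; push_cast; ring
      have e2 : Complex.exp (-(b : ℂ) * Complex.I) = Complex.exp (-((b / 2 : ℂ) * Complex.I)) ^ 2 := by
        rw [← Complex.exp_nat_mul]; congr 1; push_cast; ring
      have e3 : Complex.exp (-((b / 2 : ℂ) * Complex.I)) * Complex.exp ((b / 2 : ℂ) * Complex.I) = 1 := by
        rw [← Complex.exp_add]; simp
      rw [e1, e2]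
      linear_combination (2 : ℂ) * e3
    rw [h1, add_pow, Finset.sum_mul]
    apply Finset.sum_congr rfl
    intro l hl
    have hl' : l ≤ 2 * K := by simpa [Nat.lt_succ_iff] using hl
    rw [neg_pow, ← Complex.exp_nat_mul, ← Complex.exp_nat_mul]
    have : Complex.exp (((a + ((K : ℝ) - l) * b : ℝ) : ℂ) * Complex.I) =
      Complex.exp ((l : ℂ) * (-((b / 2 : ℂ) * Complex.I))) * 
      Complex.exp (((2 * K - l : ℕ) : ℂ) * ((b / 2 : ℂ) * Complex.I)) * Complex.exp ((a : ℂ) * Complex.I) := by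
      rw [← Complex.exp_add, ← Complex.exp_add]
      congr 1
      rw [Nat.cast_sub hl']
      push_cast
      ring
    rw [this, cc]
    push_cast
    ring
  have := congrArg Complex.re key
  rw [Complex.re_sum] at this
  simpa only [Complex.re_ofReal_mul, Complex.exp_ofReal_mul_I_re] using this

lemma cc_rho (K M : ℕ) (hM : M ≤ K) (a b : ℝ) :
    ∑ l ∈ Finset.range (2 * K + 1), cc K l * rho M (a + ((K : ℝ) - l) * b) =
      (-1) ^ M * ((2 * Real.cos b - 2) ^ K * Real.cos a) := by
  induction M with
  | zero => simpa [rho] using cc_cos K a b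
  | succ M ih =>
    simp only [rho, mul_sub, Finset.sum_sub_distrib]
    rw [ih (by omega)]
    have := cc_pow K M (by omega) a b
    simp only [← mul_div_assoc]
    rw [← Finset.sum_div, this]
    ring

lemma cplx_integral_mul (a : ℂ) (ha : a ≠ 0) (f : ℂ → ℝ) :
    ∫ z : ℂ, f (a * z) = (‖a‖ ^ 2)⁻¹ * ∫ z : ℂ, f z := by
  have hdet : LinearMap.det (LinearMap.mulLeft ℝ a) = ‖a‖ ^ 2 := by
    have := Algebra.norm_complex_apply a
    rw [Complex.normSq_eq_norm_sq] at this
    rw [← this]; rfl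
  have hne : LinearMap.det (LinearMap.mulLeft ℝ a) ≠ 0 := by
    rw [hdet]; positivity
  have hmap := Measure.map_linearMap_addHaar_eq_smul_addHaar (volume : Measure ℂ) hne
  have hemb : MeasurableEmbedding (fun z : ℂ => a * z) :=
    (Homeomorph.mulLeft₀ a ha).measurableEmbedding
  have h1 : ∫ z, f z ∂(Measure.map (fun z : ℂ => a * z) volume) = ∫ z : ℂ, f (a * z) :=
    hemb.integral_map f
  rw [← h1]
  have h2 : Measure.map (fun z : ℂ => a * z) volume =
      ENNReal.ofReal |(‖a‖ ^ 2)⁻¹| • (volume : Measure ℂ) := by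
    rw [← hdet, ← hmap]; rfl
  rw [h2, integral_smul_measure, ENNReal.toReal_ofReal (abs_nonneg _), abs_of_nonneg (by positivity)]
  rfl

lemma dom_integrable (M : ℕ) (p : ℝ) (h1 : 2 * (M : ℝ) < p) (h2 : p < 2 * (M + 1 : ℝ)) :
    Integrable (fun z : ℂ => min (‖z‖ ^ (2 * M)) (‖z‖ ^ (2 * (M + 1))) * ‖z‖ ^ (-p - 2)) := by
  have := (integrable_fun_norm_addHaar (volume : Measure ℂ)
    (f := fun r : ℝ => min (r ^ (2 * M)) (r ^ (2 * (M + 1))) * r ^ (-p - 2))).2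
  apply this
  rw [Complex.finrank_real_complex]
  have hm : ∀ s : Set ℝ, AEStronglyMeasurable (fun y : ℝ => y ^ (2 - 1) • 
      (min (y ^ (2 * M)) (y ^ (2 * (M + 1))) * y ^ (-p - 2))) (volume.restrict s) := by
    intro s
    apply Measurable.aestronglyMeasurable
    fun_prop
  rw [← Set.Ioc_union_Ioi_eq_Ioi (zero_le_one (α := ℝ))]
  apply IntegrableOn.union
  · have hi : IntegrableOn (fun x : ℝ => x ^ (2 * (M : ℝ) + 1 - p)) (Set.Ioc 0 1) := by
      rw [← intervalIntegrable_iff_integrableOn_Ioc_of_le zero_le_one]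
      exact intervalIntegral.intervalIntegrable_rpow' (by linarith)
    refine Integrable.mono' hi (hm _) ?_
    filter_upwards [ae_restrict_mem measurableSet_Ioc] with y hy
    have hy0 : 0 < y := hy.1
    rw [Real.norm_of_nonneg (by positivity)]
    have : y ^ (2 * (M : ℝ) + 1 - p) = y ^ (2 - 1) * (y ^ (2 * (M + 1)) * y ^ (-p - 2)) := by
      rw [← Real.rpow_natCast, ← Real.rpow_natCast, ← Real.rpow_add hy0, ← Real.rpow_add hy0]
      congr 1; push_cast; ring
    rw [this, smul_eq_mul]
    gcongr
    exact min_le_right _ _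
  · have hi : IntegrableOn (fun x : ℝ => x ^ (2 * (M : ℝ) - 1 - p)) (Set.Ioi 1) :=
      integrableOn_Ioi_rpow_of_lt (by linarith) one_pos
    refine Integrable.mono' hi (hm _) ?_
    filter_upwards [ae_restrict_mem measurableSet_Ioi] with y hy
    have hy0 : 0 < y := lt_trans one_pos hy
    rw [Real.norm_of_nonneg (by positivity)]
    have : y ^ (2 * (M : ℝ) - 1 - p) = y ^ (2 - 1) * (y ^ (2 * M) * y ^ (-p - 2)) := by
      rw [← Real.rpow_natCast, ← Real.rpow_natCast, ← Real.rpow_add hy0, ← Real.rpow_add hy0]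
      congr 1; push_cast; ring
    rw [this, smul_eq_mul]
    gcongr
    exact min_le_left _ _

lemma ker_integrable (M : ℕ) (p : ℝ) (h1 : 2 * (M : ℝ) < p) (h2 : p < 2 * (M + 1 : ℝ)) (x : ℂ) :
    Integrable (fun z : ℂ => rho (M + 1) (x * z).re * ‖z‖ ^ (-p - 2)) := by
  refine Integrable.mono' ((dom_integrable M p h1 h2).const_mul
    (2 * ‖x‖ ^ (2 * M) + ‖x‖ ^ (2 * (M + 1)))) ?_ ?_
  · apply Measurable.aestronglyMeasurable
    have := (rho_cont (M + 1)).measurable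
    fun_prop
  · filter_upwards with z
    have hr := rho_nonneg M (x * z).re
    have hz : 0 ≤ ‖z‖ ^ (-p - 2) := by positivity
    rw [Real.norm_of_nonneg (by positivity), ← mul_assoc]
    gcongr
    have habs : |(x * z).re| ≤ ‖x‖ * ‖z‖ := by
      rw [← norm_mul]; exact Complex.abs_re_le_norm _
    have hA : rho (M + 1) (x * z).re ≤ ‖x‖ ^ (2 * (M + 1)) * ‖z‖ ^ (2 * (M + 1)) := by
      refine (rho_le1 M _).trans ?_
      rw [← mul_pow]; gcongr
    have hB : rho (M + 1) (x * z).re ≤ 2 * ‖x‖ ^ (2 * M) * ‖z‖ ^ (2 * M) := by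
      refine (rho_le2 M _).trans ?_
      rw [mul_assoc, ← mul_pow]; gcongr
    have e1 : 0 ≤ ‖x‖ ^ (2 * (M + 1)) := by positivity
    have e2 : 0 ≤ ‖x‖ ^ (2 * M) := by positivity
    have e3 : 0 ≤ ‖z‖ ^ (2 * (M + 1)) := by positivity
    have e4 : 0 ≤ ‖z‖ ^ (2 * M) := by positivity
    rcases min_choice (‖z‖ ^ (2 * M)) (‖z‖ ^ (2 * (M + 1))) with h | h <;> rw [h] <;>
      nlinarith [mul_nonneg e1 e3, mul_nonneg e1 e4, mul_nonneg e2 e3, mul_nonneg e2 e4]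

noncomputable def kA (M : ℕ) (p : ℝ) : ℝ := ∫ z : ℂ, rho (M + 1) z.re * ‖z‖ ^ (-p - 2)

lemma kA_pos (M : ℕ) (p : ℝ) (h1 : 2 * (M : ℝ) < p) (h2 : p < 2 * (M + 1 : ℝ)) :
    0 < kA M p := by
  have hi := ker_integrable M p h1 h2 1
  simp only [one_mul] at hi
  rw [kA, integral_pos_iff_support_of_nonneg _ hi]
  · have hopen : IsOpen (Complex.re ⁻¹' (Set.Ioo (0 : ℝ) 1)) := isOpen_Ioo.preimage Complex.continuous_re
    refine lt_of_lt_of_le (hopen.measure_pos volume ⟨((1 / 2 : ℝ) : ℂ), ?_⟩) (measure_mono ?_)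
    · simp; norm_num
    · intro z hz
      have hz0 : z ≠ 0 := by
        rintro rfl; simp at hz
      have := rho_pos (M + 1) z.re hz.1 hz.2
      have : 0 < ‖z‖ := norm_pos_iff.2 hz0
      simp only [Function.mem_support]
      positivity
  · intro z
    have := rho_nonneg M z.re
    simp only [Pi.zero_apply]; positivity

lemma ker_integral (M : ℕ) (p : ℝ) (hp : 0 < p) (x : ℂ) :
    ∫ z : ℂ, rho (M + 1) (x * z).re * ‖z‖ ^ (-p - 2) = kA M p * ‖x‖ ^ p := by
  by_cases hx : x = 0
  · subst hx; simp [rho_zero, Real.zero_rpow hp.ne']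
  have hx' : 0 < ‖x‖ := norm_pos_iff.2 hx
  have h := cplx_integral_mul x hx (fun z => rho (M + 1) z.re * ‖z‖ ^ (-p - 2))
  have h3 : ∀ z : ℂ, rho (M + 1) (x * z).re * ‖z‖ ^ (-p - 2) =
      ‖x‖ ^ (p + 2) * (rho (M + 1) (x * z).re * ‖x * z‖ ^ (-p - 2)) := by
    intro z
    rw [norm_mul, Real.mul_rpow (norm_nonneg _) (norm_nonneg _)]
    have : ‖x‖ ^ (p + 2) * ‖x‖ ^ (-p - 2) = 1 := by
      rw [← Real.rpow_add hx']; ring_nf; simp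
    linear_combination (-(rho (M + 1) (x * z).re * ‖z‖ ^ (-p - 2))) * this
  simp_rw [h3]
  rw [integral_const_mul, h, kA, Real.rpow_add hx', Real.rpow_two]
  field_simp

/-- the multiplier -/
noncomputable def mS (K : ℕ) (p : ℝ) (h z : ℂ) : ℝ :=
  (2 * Real.cos (h * z).re - 2) ^ K * ‖z‖ ^ (-p - 2)

lemma diff_pointwise (M : ℕ) (p : ℝ) (h x z : ℂ) :
    ∑ l ∈ Finset.range (2 * (M + 1) + 1), cc (M + 1) l *
      (rho (M + 1) ((x + (((M + 1 : ℕ) : ℂ) - l) * h) * z).re * ‖z‖ ^ (-p - 2)) =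
    (-1) ^ (M + 1) * (Real.cos (x * z).re * mS (M + 1) p h z) := by
  have := cc_rho (M + 1) (M + 1) le_rfl (x * z).re (h * z).re
  have e : ∀ l : ℕ, ((x + (((M + 1 : ℕ) : ℂ) - l) * h) * z).re =
      (x * z).re + (((M + 1 : ℕ) : ℝ) - l) * (h * z).re := by
    intro l
    have : (x + (((M + 1 : ℕ) : ℂ) - l) * h) * z = x * z + ((((M + 1 : ℕ) : ℝ) - (l : ℝ) : ℝ) : ℂ) * (h * z) := by
      push_cast; ring
    rw [this, Complex.add_re, Complex.re_ofReal_mul]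
  simp_rw [e, ← mul_assoc]
  rw [← Finset.sum_mul, this, mS]
  ring

lemma mS_integrable (M : ℕ) (p : ℝ) (h1 : 2 * (M : ℝ) < p) (h2 : p < 2 * (M + 1 : ℝ)) (h : ℂ) :
    Integrable (mS (M + 1) p h) := by
  have : Integrable (fun z => (-1) ^ (M + 1) * ∑ l ∈ Finset.range (2 * (M + 1) + 1), cc (M + 1) l *
      (rho (M + 1) ((0 + (((M + 1 : ℕ) : ℂ) - l) * h) * z).re * ‖z‖ ^ (-p - 2))) := by
    apply Integrable.const_mul
    apply integrable_finsetSum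
    intro l _
    exact (ker_integrable M p h1 h2 _).const_mul _
  refine this.congr ?_
  filter_upwards with z
  rw [diff_pointwise, ← mul_assoc, ← mul_pow]
  simp

lemma exp_mS_integrable (M : ℕ) (p : ℝ) (h1 : 2 * (M : ℝ) < p) (h2 : p < 2 * (M + 1 : ℝ)) (h x : ℂ) :
    Integrable (fun z => Complex.exp (((x * z).re : ℂ) * Complex.I) * (mS (M + 1) p h z : ℂ)) := by
  refine (mS_integrable M p h1 h2 h).ofReal.bdd_mul (c := 1) ?_ ?_
  · apply Continuous.aestronglyMeasurable; fun_prop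
  · filter_upwards with z
    rw [Complex.norm_exp_ofReal_mul_I]

lemma diff_integral (M : ℕ) (p : ℝ) (h1 : 2 * (M : ℝ) < p) (h2 : p < 2 * (M + 1 : ℝ)) (h x : ℂ)
    (hp : 0 < p) :
    (((kA M p * ∑ l ∈ Finset.range (2 * (M + 1) + 1), cc (M + 1) l *
      ‖x + (((M + 1 : ℕ) : ℂ) - l) * h‖ ^ p : ℝ)) : ℂ) =
    (-1) ^ (M + 1) * ∫ z : ℂ, Complex.exp (((x * z).re : ℂ) * Complex.I) * (mS (M + 1) p h z : ℂ) := by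
  have hodd : ∫ z : ℂ, (Real.sin (x * z).re * mS (M + 1) p h z) = 0 := by
    have := integral_neg_eq_self (fun z : ℂ => Real.sin (x * z).re * mS (M + 1) p h z) volume
    simp only [mS, mul_neg, Complex.neg_re, Real.sin_neg, Real.cos_neg, norm_neg, neg_mul,
      integral_neg] at this
    simp only [mS]
    linarith
  have hsin : Integrable (fun z : ℂ => Real.sin (x * z).re * mS (M + 1) p h z) := by
    refine (mS_integrable M p h1 h2 h).bdd_mul (c := 1) ?_ ?_
    · apply Continuous.aestronglyMeasurable; fun_prop
    · filter_upwards with z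
      exact Real.abs_sin_le_one _
  have hcos : Integrable (fun z : ℂ => Real.cos (x * z).re * mS (M + 1) p h z) := by
    refine (mS_integrable M p h1 h2 h).bdd_mul (c := 1) ?_ ?_
    · apply Continuous.aestronglyMeasurable; fun_prop
    · filter_upwards with z
      exact Real.abs_cos_le_one _
  have hE : ∫ z : ℂ, Complex.exp (((x * z).re : ℂ) * Complex.I) * (mS (M + 1) p h z : ℂ) =
      ((∫ z : ℂ, (Real.cos (x * z).re * mS (M + 1) p h z) : ℝ) : ℂ) := by
    have : ∀ z : ℂ, Complex.exp (((x * z).re : ℂ) * Complex.I) * (mS (M + 1) p h z : ℂ) =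
      ((Real.cos (x * z).re * mS (M + 1) p h z : ℝ) : ℂ) +
      ((Real.sin (x * z).re * mS (M + 1) p h z : ℝ) : ℂ) * Complex.I := by
      intro z
      rw [Complex.exp_mul_I]; push_cast; ring
    simp_rw [this]
    rw [integral_add hcos.ofReal (hsin.ofReal.mul_const _), integral_mul_const, integral_complex_ofReal,
      integral_complex_ofReal, hodd]
    simp
  rw [hE, Finset.mul_sum]
  have h3 : ∑ l ∈ Finset.range (2 * (M + 1) + 1), kA M p * (cc (M + 1) l *
      ‖x + (((M + 1 : ℕ) : ℂ) - l) * h‖ ^ p) = (-1) ^ (M + 1) * 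
      ∫ z : ℂ, (Real.cos (x * z).re * mS (M + 1) p h z) := by
    rw [← integral_const_mul]
    simp_rw [← diff_pointwise]
    rw [integral_finsetSum _ (fun l _ => (ker_integrable M p h1 h2 _).const_mul _)]
    apply Finset.sum_congr rfl
    intro l _
    rw [integral_const_mul, ker_integral M p hp]
    ring
  rw [h3]
  push_cast
  rfl

noncomputable def mhat (μ : Measure ℂ) (z : ℂ) : ℂ :=
  ∫ w, Complex.exp (((w * z).re : ℂ) * Complex.I) ∂μ

lemma mhat_cont (μ : Measure ℂ) [IsFiniteMeasure μ] : Continuous (mhat μ) := by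
  unfold mhat
  refine continuous_of_dominated (bound := fun _ => 1) ?_ ?_ (integrable_const _) ?_
  · intro z
    apply Continuous.aestronglyMeasurable; fun_prop
  · intro z
    filter_upwards with w
    rw [Complex.norm_exp_ofReal_mul_I]
  · filter_upwards with w
    fun_prop

lemma mhat_bound (μ : Measure ℂ) [IsFiniteMeasure μ] (z : ℂ) : ‖mhat μ z‖ ≤ μ.real Set.univ := by
  unfold mhat
  refine (norm_integral_le_integral_norm _).trans ?_
  simp only [Complex.norm_exp_ofReal_mul_I]
  simp

lemma avg_formula (M : ℕ) (p : ℝ) (h1 : 2 * (M : ℝ) < p) (h2 : p < 2 * (M + 1 : ℝ)) (hp : 0 < p)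
    (μ : Measure ℂ) [IsFiniteMeasure μ]
    (hμ : ∀ y : ℂ, Integrable (fun w => ‖y + w‖ ^ p) μ) (h x : ℂ) :
    (((kA M p * ∑ l ∈ Finset.range (2 * (M + 1) + 1), cc (M + 1) l *
      ∫ w, ‖(x + (((M + 1 : ℕ) : ℂ) - l) * h) + w‖ ^ p ∂μ : ℝ)) : ℂ) =
    (-1) ^ (M + 1) * ∫ z : ℂ, Complex.exp (((x * z).re : ℂ) * Complex.I) *
      ((mS (M + 1) p h z : ℂ) * mhat μ z) := by
  have e1 : kA M p * ∑ l ∈ Finset.range (2 * (M + 1) + 1), cc (M + 1) l *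
      ∫ w, ‖(x + (((M + 1 : ℕ) : ℂ) - l) * h) + w‖ ^ p ∂μ =
      ∫ w, kA M p * ∑ l ∈ Finset.range (2 * (M + 1) + 1), cc (M + 1) l *
        ‖(x + w) + (((M + 1 : ℕ) : ℂ) - l) * h‖ ^ p ∂μ := by
    rw [integral_const_mul, integral_finsetSum]
    · congr 1
      apply Finset.sum_congr rfl
      intro l _
      rw [integral_const_mul]
      congr 1
      apply integral_congr_ae
      filter_upwards with w
      rw [add_right_comm x]
    · intro l _
      apply Integrable.const_mul
      refine (hμ (x + (((M + 1 : ℕ) : ℂ) - l) * h)).congr ?_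
      filter_upwards with w
      rw [add_right_comm x]
  rw [e1, ← integral_complex_ofReal]
  simp_rw [diff_integral M p h1 h2 h _ hp]
  rw [integral_const_mul, integral_integral_swap]
  · congr 1
    apply integral_congr_ae
    filter_upwards with z
    rw [mhat, ← integral_const_mul, ← integral_const_mul]
    apply integral_congr_ae
    filter_upwards with w
    have : Complex.exp ((((x + w) * z).re : ℂ) * Complex.I) = 
      Complex.exp (((x * z).re : ℂ) * Complex.I) * Complex.exp (((w * z).re : ℂ) * Complex.I) := by
      rw [← Complex.exp_add, add_mul, Complex.add_re]; push_cast; ring_nf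
    rw [this]; ring
  · have hS : Integrable (fun q : ℂ × ℂ => (mS (M + 1) p h q.2 : ℂ)) (μ.prod volume) :=
      ((mS_integrable M p h1 h2 h).ofReal (𝕜 := ℂ)).comp_snd μ
    refine hS.bdd_mul (c := 1) ?_ ?_
    · apply Continuous.aestronglyMeasurable; fun_prop
    · filter_upwards with z
      rw [Complex.norm_exp_ofReal_mul_I]

lemma cc_sum (K : ℕ) (hK : 0 < K) : ∑ l ∈ Finset.range (2 * K + 1), cc K l = 0 := by
  simpa using cc_pow K 0 hK 0 0

lemma core_ne (M : ℕ) (p : ℝ) (h1 : 2 * (M : ℝ) < p) (h2 : p < 2 * (M + 1 : ℝ)) (hp : 0 < p)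
    (μ ν : Measure ℂ) [IsFiniteMeasure μ] [IsFiniteMeasure ν]
    (hμ : ∀ y : ℂ, Integrable (fun w => ‖y + w‖ ^ p) μ)
    (hν : ∀ y : ℂ, Integrable (fun w => ‖y + w‖ ^ p) ν) (c : ℝ)
    (heq : ∀ y : ℂ, y ≠ 0 → ∫ w, ‖y + w‖ ^ p ∂μ = ∫ w, ‖y + w‖ ^ p ∂ν + c)
    (z : ℂ) (hz : z ≠ 0) : mhat μ z = mhat ν z := by
  set h : ℂ := z⁻¹ with hh
  set f : ℂ → ℂ := fun v => (mS (M + 1) p h v : ℂ) * (mhat μ v - mhat ν v) with hf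
  have hfi : ∀ (κ : Measure ℂ) [IsFiniteMeasure κ],
      Integrable (fun v => (mS (M + 1) p h v : ℂ) * mhat κ v) := by
    intro κ _
    exact ((mS_integrable M p h1 h2 h).ofReal (𝕜 := ℂ)).mul_bdd (c := κ.real Set.univ)
      (mhat_cont κ).aestronglyMeasurable (Filter.Eventually.of_forall (mhat_bound κ))
  have hfi' : ∀ (κ : Measure ℂ) [IsFiniteMeasure κ] (x : ℂ),
      Integrable (fun v => Complex.exp (((x * v).re : ℂ) * Complex.I) *
        ((mS (M + 1) p h v : ℂ) * mhat κ v)) := by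
    intro κ _ x
    refine (hfi κ).bdd_mul (c := 1) ?_ ?_
    · apply Continuous.aestronglyMeasurable; fun_prop
    · filter_upwards with z
      rw [Complex.norm_exp_ofReal_mul_I]
  have hfint : Integrable f := by
    have := (hfi μ).sub (hfi ν)
    refine this.congr ?_
    filter_upwards with v
    simp [hf, mul_sub]
  have hx : ∀ x : ℂ, (∀ l ∈ Finset.range (2 * (M + 1) + 1), x + (((M + 1 : ℕ) : ℂ) - l) * h ≠ 0) →
      ∫ v : ℂ, Complex.exp (((x * v).re : ℂ) * Complex.I) * f v = 0 := by
    intro x hx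
    have a1 := avg_formula M p h1 h2 hp μ hμ h x
    have a2 := avg_formula M p h1 h2 hp ν hν h x
    have a3 : ∑ l ∈ Finset.range (2 * (M + 1) + 1), cc (M + 1) l *
        ∫ w, ‖(x + (((M + 1 : ℕ) : ℂ) - l) * h) + w‖ ^ p ∂μ =
        ∑ l ∈ Finset.range (2 * (M + 1) + 1), cc (M + 1) l *
        ∫ w, ‖(x + (((M + 1 : ℕ) : ℂ) - l) * h) + w‖ ^ p ∂ν := by
      have := cc_sum (M + 1) (Nat.succ_pos M)
      rw [← sub_eq_zero, ← Finset.sum_sub_distrib]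
      calc _ = ∑ l ∈ Finset.range (2 * (M + 1) + 1), cc (M + 1) l * c := by
            apply Finset.sum_congr rfl
            intro l hl
            rw [heq _ (hx l hl)]; ring
        _ = 0 := by rw [← Finset.sum_mul, this, zero_mul]
    rw [a3, a2] at a1
    have a4 := mul_left_cancel₀ (pow_ne_zero _ (neg_ne_zero.2 one_ne_zero)) a1
    simp only [hf, mul_sub]
    rw [integral_sub (hfi' μ x) (hfi' ν x), a4, sub_self]
  have hF : ∀ᵐ w : ℂ, FourierTransform.fourier f w = 0 := by
    have hfin : (⋃ l ∈ Finset.range (2 * (M + 1) + 1),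
        {w : ℂ | (-2 * Real.pi * (starRingEnd ℂ) w) + (((M + 1 : ℕ) : ℂ) - l) * h = 0}).Finite := by
      apply Set.Finite.biUnion (Finset.finite_toSet _)
      intro l _
      apply Set.Subsingleton.finite
      intro a ha b hb
      simp only [Set.mem_ofPred_eq] at ha hb
      have : (-2 * Real.pi * (starRingEnd ℂ) a : ℂ) = (-2 * Real.pi * (starRingEnd ℂ) b) :=
        add_right_cancel (ha.trans hb.symm)
      have h2 : (-2 * Real.pi : ℂ) ≠ 0 := by
        simp [Real.pi_ne_zero]
      exact (starRingEnd ℂ).injective (mul_left_cancel₀ h2 this)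
    have := hfin.measure_zero (volume : Measure ℂ)
    filter_upwards [compl_mem_ae_iff.2 this] with w hw
    rw [Real.fourier_eq', ← hx (-2 * Real.pi * (starRingEnd ℂ) w)]
    · apply integral_congr_ae
      filter_upwards with v
      rw [smul_eq_mul]
      congr 4
      rw [real_inner_comm, Complex.inner]
      have : (-2 * Real.pi * (starRingEnd ℂ) w * v : ℂ) = ((-2 * Real.pi : ℝ) : ℂ) * (v * (starRingEnd ℂ) w) := by
        push_cast; ring
      rw [this, Complex.re_ofReal_mul]
    · intro l hl h0
      apply hw
      simp only [Set.mem_iUnion]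
      exact ⟨l, hl, h0⟩
  have hFi : Integrable (FourierTransform.fourier f) := 
    (integrable_zero ℂ ℂ volume).congr (hF.mono fun _ hx => hx.symm)
  have hc : ContinuousAt f z := by
    have c1 := (mhat_cont μ).continuousAt (x := z)
    have c2 := (mhat_cont ν).continuousAt (x := z)
    have c3 : ContinuousAt (mS (M + 1) p h) z := by
      unfold mS
      apply ContinuousAt.mul
      · fun_prop
      · exact continuous_norm.continuousAt.rpow_const (Or.inl (norm_ne_zero_iff.2 hz))
    exact (Complex.continuous_ofReal.continuousAt.comp c3).mul (c1.sub c2)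
  have hinv := hfint.fourierInv_fourier_eq hFi hc
  have h0 : f z = 0 := by
    rw [← hinv, Real.fourierInv_eq']
    rw [integral_congr_ae (g := fun _ => (0 : ℂ)), integral_zero]
    filter_upwards [hF] with w hw
    rw [hw, smul_zero]
  simp only [hf] at h0
  have hS : mS (M + 1) p h z ≠ 0 := by
    unfold mS
    have : 0 < ‖z‖ := norm_pos_iff.2 hz
    apply mul_ne_zero
    · apply pow_ne_zero
      rw [hh, inv_mul_cancel₀ hz, Complex.one_re]
      have : Real.cos 1 < 1 := by
        have := Real.cos_one_le
        linarith
      linarith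
    · positivity
  rcases mul_eq_zero.1 h0 with h | h
  · exact absurd (by exact_mod_cast h) hS
  · exact sub_eq_zero.1 h

lemma core (p : ℝ) (hp : 0 < p) (hpe : ∀ k : ℕ, p ≠ 2 * k)
    (μ ν : Measure ℂ) [IsFiniteMeasure μ] [IsFiniteMeasure ν]
    (hμ : ∀ y : ℂ, Integrable (fun w => ‖y + w‖ ^ p) μ)
    (hν : ∀ y : ℂ, Integrable (fun w => ‖y + w‖ ^ p) ν) (c : ℝ)
    (heq : ∀ y : ℂ, y ≠ 0 → ∫ w, ‖y + w‖ ^ p ∂μ = ∫ w, ‖y + w‖ ^ p ∂ν + c) :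
    mhat μ = mhat ν := by
  have h1 : 2 * ((⌊p / 2⌋₊ : ℕ) : ℝ) < p := by
    have := Nat.floor_le (show 0 ≤ p / 2 by positivity)
    exact lt_of_le_of_ne (by linarith) (hpe _).symm
  have h2 : p < 2 * ((⌊p / 2⌋₊ : ℕ) + 1 : ℝ) := by
    have := Nat.lt_floor_add_one (p / 2)
    linarith
  apply Continuous.ext_on (dense_compl_singleton (0 : ℂ)) (mhat_cont μ) (mhat_cont ν)
  intro z hz
  exact core_ne _ p h1 h2 hp μ ν hμ hν c heq z hz

noncomputable def tm {Ω : Type*} [MeasurableSpace Ω] (l : Measure Ω) (N : ℕ) (p : ℝ)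
    (Φ : Fin (N + 1) → Ω → ℂ) : Measure (Fin N → ℂ) :=
  (l.withDensity (fun z => ENNReal.ofReal (‖Φ 0 z‖ ^ p))).map (fun z k => Φ k.succ z / Φ 0 z)

lemma tm_finite {Ω : Type*} [MeasurableSpace Ω] (l : Measure Ω) (N : ℕ) (p : ℝ)
    (Φ : Fin (N + 1) → Ω → ℂ) (hi : Integrable (fun z => ‖Φ 0 z‖ ^ p) l) :
    IsFiniteMeasure (tm l N p Φ) := by
  have : IsFiniteMeasure (l.withDensity (fun z => ENNReal.ofReal (‖Φ 0 z‖ ^ p))) :=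
    isFiniteMeasure_withDensity_ofReal hi.2
  unfold tm
  infer_instance

lemma comb_integrable {Ω : Type*} [MeasurableSpace Ω] (l : Measure Ω) (N : ℕ) (p : ℝ) (hp : 0 < p)
    (Φ : Fin (N + 1) → Ω → ℂ) (hm : ∀ k, Measurable (Φ k))
    (hi : ∀ k, Integrable (fun z => ‖Φ k z‖ ^ p) l) (y : ℂ) (α : Fin N → ℂ) :
    Integrable (fun z => ‖y * Φ 0 z + ∑ k : Fin N, α k * Φ k.succ z‖ ^ p) l := by
  have hp0 : ENNReal.ofReal p ≠ 0 := by simpa using hp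
  have hpr : (ENNReal.ofReal p).toReal = p := ENNReal.toReal_ofReal hp.le
  have hL : ∀ k, MemLp (Φ k) (ENNReal.ofReal p) l := by
    intro k
    rw [← integrable_norm_rpow_iff (hm k).aestronglyMeasurable hp0 ENNReal.ofReal_ne_top, hpr]
    exact hi k
  have : MemLp (fun z => y * Φ 0 z + ∑ k : Fin N, α k * Φ k.succ z) (ENNReal.ofReal p) l := by
    apply MemLp.add ((hL 0).const_mul y)
    exact memLp_finsetSum _ (fun k _ => (hL k.succ).const_mul (α k))
  rw [← integrable_norm_rpow_iff this.1 hp0 ENNReal.ofReal_ne_top, hpr] at this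
  exact this

lemma tm_integrable {Ω : Type*} [MeasurableSpace Ω] (l : Measure Ω) (N : ℕ) (p : ℝ) (hp : 0 < p)
    (Φ : Fin (N + 1) → Ω → ℂ) (hm : ∀ k, Measurable (Φ k))
    (hi : ∀ k, Integrable (fun z => ‖Φ k z‖ ^ p) l) (y : ℂ) (α : Fin N → ℂ) :
    Integrable (fun w => ‖y + w‖ ^ p) ((tm l N p Φ).map (fun z => ∑ k, α k * z k)) ∧
    ∫ w, ‖y + w‖ ^ p ∂((tm l N p Φ).map (fun z => ∑ k, α k * z k)) =
      ∫ z, ‖y * Φ 0 z + ∑ k : Fin N, α k * Φ k.succ z‖ ^ p ∂l -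
      ∫ z, {z | Φ 0 z = 0}.indicator (fun z => ‖∑ k : Fin N, α k * Φ k.succ z‖ ^ p) z ∂l := by
  have hg : Measurable (fun z (k : Fin N) => Φ k.succ z / Φ 0 z) :=
    measurable_pi_lambda _ fun k => (hm _).div (hm 0)
  have hs : Measurable (fun z : Fin N → ℂ => ∑ k, α k * z k) := by fun_prop
  have hn : Measurable (fun w : ℂ => ‖y + w‖ ^ p) := by fun_prop
  have hd : Measurable (fun z => ENNReal.ofReal (‖Φ 0 z‖ ^ p)) := by
    have := hm 0
    fun_prop
  have hset : MeasurableSet {z | Φ 0 z = 0} := hm 0 (measurableSet_singleton 0)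
  have hI1 := comb_integrable l N p hp Φ hm hi y α
  have hI2 : Integrable ({z | Φ 0 z = 0}.indicator
      (fun z => ‖∑ k : Fin N, α k * Φ k.succ z‖ ^ p)) l := by
    have := comb_integrable l N p hp Φ hm hi 0 α
    simp only [zero_mul, zero_add] at this
    exact this.indicator hset
  have hpt : ∀ z, (ENNReal.ofReal (‖Φ 0 z‖ ^ p)).toReal •
      ‖y + ∑ k, α k * (Φ k.succ z / Φ 0 z)‖ ^ p =
      ‖y * Φ 0 z + ∑ k : Fin N, α k * Φ k.succ z‖ ^ p -
      {z | Φ 0 z = 0}.indicator (fun z => ‖∑ k : Fin N, α k * Φ k.succ z‖ ^ p) z := by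
    intro z
    rw [ENNReal.toReal_ofReal (by positivity), smul_eq_mul]
    by_cases h : Φ 0 z = 0
    · rw [Set.indicator_of_mem (by exact h), h]
      simp [Real.zero_rpow hp.ne']
    · rw [Set.indicator_of_notMem (by exact h), sub_zero, ← Real.mul_rpow (norm_nonneg _) (norm_nonneg _),
        ← norm_mul, mul_add, Finset.mul_sum, mul_comm y]
      congr 3
      apply Finset.sum_congr rfl
      intro k _
      field_simp
  have hlt : ∀ᵐ z ∂l, ENNReal.ofReal (‖Φ 0 z‖ ^ p) < ⊤ := by
    filter_upwards with z using ENNReal.ofReal_lt_top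
  constructor
  · rw [integrable_map_measure hn.aestronglyMeasurable hs.aemeasurable, tm,
      integrable_map_measure (hn.comp hs).aestronglyMeasurable hg.aemeasurable,
      integrable_withDensity_iff_integrable_smul' hd hlt]
    simp only [Function.comp_def, hpt]
    exact hI1.sub hI2
  · rw [integral_map hs.aemeasurable hn.aestronglyMeasurable, tm,
      integral_map hg.aemeasurable
        (f := fun x => ‖y + ∑ k, α k * x k‖ ^ p) (hn.comp hs).aestronglyMeasurable,
      integral_withDensity_eq_integral_toReal_smul hd hlt]
    simp only [hpt]
    rw [integral_sub hI1 hI2]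

lemma scale_int {Ω : Type*} [MeasurableSpace Ω] (l : Measure Ω) (N : ℕ) (p : ℝ)
    (X : Fin (N + 1) → Ω → ℂ) (y : ℂ) (hy : y ≠ 0) (α : Fin N → ℂ) :
    ∫ z, ‖y * X 0 z + ∑ k : Fin N, α k * X k.succ z‖ ^ p ∂l =
      ‖y‖ ^ p * ∫ z, ‖X 0 z + ∑ k : Fin N, (α k / y) * X k.succ z‖ ^ p ∂l := by
  rw [← integral_const_mul]
  apply integral_congr_ae
  filter_upwards with z
  rw [← Real.mul_rpow (norm_nonneg _) (norm_nonneg _), ← norm_mul, mul_add, Finset.mul_sum]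
  congr 3
  apply Finset.sum_congr rfl
  intro k _
  field_simp

lemma dual_repr (N : ℕ) (L : StrongDual ℝ (Fin N → ℂ)) :
    ∃ α : Fin N → ℂ, ∀ z : Fin N → ℂ, L z = (∑ k, α k * z k).re := by
  let α : Fin N → ℂ := fun k => (L (Pi.single k 1) : ℂ) - (L (Pi.single k Complex.I) : ℂ) * Complex.I
  refine ⟨α, fun z => ?_⟩
  have hz : z = ∑ k, ((z k).re • (Pi.single k (1 : ℂ) : Fin N → ℂ) + 
      (z k).im • (Pi.single k Complex.I : Fin N → ℂ)) := by
    conv_lhs => rw [← Finset.univ_sum_single z]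
    apply Finset.sum_congr rfl
    intro k _
    rw [← Pi.single_smul, ← Pi.single_smul, ← Pi.single_add]
    congr 1
    simp [Complex.re_add_im]
  conv_lhs => rw [hz]
  rw [map_sum, Complex.re_sum]
  apply Finset.sum_congr rfl
  intro k _
  simp [α]
  ring

lemma abstract_char {Ω₁ Ω₂ : Type*} [MeasurableSpace Ω₁] [MeasurableSpace Ω₂]
    (l₁ : Measure Ω₁) (l₂ : Measure Ω₂) (N : ℕ) (p : ℝ) (hp : 0 < p) (hpe : ∀ k : ℕ, p ≠ 2 * k)
    (Φ : Fin (N + 1) → Ω₁ → ℂ) (Ψ : Fin (N + 1) → Ω₂ → ℂ)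
    (hΦ : ∀ k, Measurable (Φ k)) (hΨ : ∀ k, Measurable (Ψ k))
    (hΦi : ∀ k, Integrable (fun z => ‖Φ k z‖ ^ p) l₁)
    (hΨi : ∀ k, Integrable (fun z => ‖Ψ k z‖ ^ p) l₂)
    (heq : ∀ α : Fin N → ℂ,
      ∫ z, ‖Φ 0 z + ∑ k : Fin N, α k * Φ k.succ z‖ ^ p ∂l₁ =
      ∫ z, ‖Ψ 0 z + ∑ k : Fin N, α k * Ψ k.succ z‖ ^ p ∂l₂) (α : Fin N → ℂ) :
    ∫ z, Complex.exp (((∑ k, α k * z k).re : ℂ) * Complex.I) ∂(tm l₁ N p Φ) =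
      ∫ z, Complex.exp (((∑ k, α k * z k).re : ℂ) * Complex.I) ∂(tm l₂ N p Ψ) := by
  have := tm_finite l₁ N p Φ (hΦi 0)
  have := tm_finite l₂ N p Ψ (hΨi 0)
  have hs : Measurable (fun z : Fin N → ℂ => ∑ k, α k * z k) := by fun_prop
  have hT1 := fun y => tm_integrable l₁ N p hp Φ hΦ hΦi y α
  have hT2 := fun y => tm_integrable l₂ N p hp Ψ hΨ hΨi y α
  have hsc : ∀ y : ℂ, y ≠ 0 → ∫ z, ‖y * Φ 0 z + ∑ k : Fin N, α k * Φ k.succ z‖ ^ p ∂l₁ =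
      ∫ z, ‖y * Ψ 0 z + ∑ k : Fin N, α k * Ψ k.succ z‖ ^ p ∂l₂ := by
    intro y hy
    rw [scale_int l₁ N p Φ y hy α, scale_int l₂ N p Ψ y hy α, heq]
  generalize tm l₁ N p Φ = T₁ at *
  generalize tm l₂ N p Ψ = T₂ at *
  generalize hc1 : ∫ z, {z | Φ 0 z = 0}.indicator
    (fun z => ‖∑ k : Fin N, α k * Φ k.succ z‖ ^ p) z ∂l₁ = c₁ at hT1
  generalize hc2 : ∫ z, {z | Ψ 0 z = 0}.indicator
    (fun z => ‖∑ k : Fin N, α k * Ψ k.succ z‖ ^ p) z ∂l₂ = c₂ at hT2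
  have key : mhat (T₁.map (fun z => ∑ k, α k * z k)) = mhat (T₂.map (fun z => ∑ k, α k * z k)) := by
    refine core p hp hpe _ _ (fun y => (hT1 y).1) (fun y => (hT2 y).1) (c₂ - c₁) ?_
    intro y hy
    rw [(hT1 y).2, (hT2 y).2, hsc y hy]
    ring
  have k1 := congrFun key 1
  have hc : Continuous (fun w : ℂ => Complex.exp (((w * 1).re : ℂ) * Complex.I)) := by fun_prop
  rw [mhat, mhat, integral_map hs.aemeasurable hc.aestronglyMeasurable,
    integral_map hs.aemeasurable hc.aestronglyMeasurable] at k1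
  simpa only [mul_one] using k1

lemma abstract_equi {Ω₁ Ω₂ : Type*} [MeasurableSpace Ω₁] [MeasurableSpace Ω₂]
    (l₁ : Measure Ω₁) (l₂ : Measure Ω₂) (N : ℕ) (p : ℝ) (hp : 0 < p) (hpe : ∀ k : ℕ, p ≠ 2 * k)
    (Φ : Fin (N + 1) → Ω₁ → ℂ) (Ψ : Fin (N + 1) → Ω₂ → ℂ)
    (hΦ : ∀ k, Measurable (Φ k)) (hΨ : ∀ k, Measurable (Ψ k))
    (hΦi : ∀ k, Integrable (fun z => ‖Φ k z‖ ^ p) l₁)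
    (hΨi : ∀ k, Integrable (fun z => ‖Ψ k z‖ ^ p) l₂)
    (heq : ∀ α : Fin N → ℂ,
      ∫ z, ‖Φ 0 z + ∑ k : Fin N, α k * Φ k.succ z‖ ^ p ∂l₁ =
      ∫ z, ‖Ψ 0 z + ∑ k : Fin N, α k * Ψ k.succ z‖ ^ p ∂l₂) :
    tm l₁ N p Φ = tm l₂ N p Ψ := by
  have := tm_finite l₁ N p Φ (hΦi 0)
  have := tm_finite l₂ N p Ψ (hΨi 0)
  apply Measure.ext_of_charFunDual
  ext L
  rw [charFunDual_apply, charFunDual_apply]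
  obtain ⟨α, hL⟩ := dual_repr N L
  simp only [hL]
  exact abstract_char l₁ l₂ N p hp hpe Φ Ψ hΦ hΨ hΦi hΨi heq α

lemma lint_tm {Ω : Type*} [MeasurableSpace Ω] (l : Measure Ω) (N : ℕ) (p : ℝ)
    (Φ : Fin (N + 1) → Ω → ℂ) (hm : ∀ k, Measurable (Φ k)) (u : (Fin N → ℂ) → ENNReal)
    (hu : Measurable u) :
    ∫⁻ z, u (fun k => Φ k.succ z / Φ 0 z) * ENNReal.ofReal (‖Φ 0 z‖ ^ p) ∂l =
      ∫⁻ w, u w ∂(tm l N p Φ) := by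
  have hg : Measurable (fun z (k : Fin N) => Φ k.succ z / Φ 0 z) :=
    measurable_pi_lambda _ fun k => (hm _).div (hm 0)
  have hd : Measurable (fun z => ENNReal.ofReal (‖Φ 0 z‖ ^ p)) := by
    have := hm 0
    fun_prop
  rw [tm, lintegral_map hu hg, lintegral_withDensity_eq_lintegral_mul _ hd
    (g := fun z => u (fun k => Φ k.succ z / Φ 0 z)) (hu.comp hg)]
  apply lintegral_congr
  intro z
  simp [mul_comm]

lemma ap_ind (n : ℕ) (p : ℝ) (D : Set (Fin n → ℂ)) (hD : IsOpen D) (φ : (Fin n → ℂ) → ℂ)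
    (h : MemAp n p D φ) : Measurable (D.indicator φ) := by
  classical
  rw [← Set.piecewise_eq_indicator]
  exact h.1.continuousOn.measurable_piecewise continuousOn_const hD.measurableSet

/-- equimeasurability for tuples of `A^p` functions with matching norms
of all affine combinations. -/
theorem equimeasurable_tuples (n m N : ℕ)
    (D₁ : Set (Fin n → ℂ)) (D₂ : Set (Fin m → ℂ))
    (hD₁ : IsOpen D₁) (hD₁c : IsConnected D₁) (hD₁b : Bornology.IsBounded D₁)
    (hD₂ : IsOpen D₂) (hD₂c : IsConnected D₂) (hD₂b : Bornology.IsBounded D₂)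
    (p : ℝ) (hp : 0 < p) (hpe : ∀ k : ℕ, p ≠ 2 * k)
    (φ : Fin (N + 1) → (Fin n → ℂ) → ℂ) (ψ : Fin (N + 1) → (Fin m → ℂ) → ℂ)
    (hφ : ∀ k, MemAp n p D₁ (φ k)) (hψ : ∀ k, MemAp m p D₂ (ψ k))
    (hφ0 : ∃ z ∈ D₁, φ 0 z ≠ 0) (hψ0 : ∃ w ∈ D₂, ψ 0 w ≠ 0)
    (heq : ∀ α : Fin N → ℂ,
      apNorm n p D₁ (fun z => φ 0 z + ∑ k : Fin N, α k * φ k.succ z) =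
      apNorm m p D₂ (fun w => ψ 0 w + ∑ k : Fin N, α k * ψ k.succ w)) :
    ∀ u : (Fin N → ℂ) → ENNReal, Measurable u →
      ∫⁻ z in D₁, u (fun k => φ k.succ z / φ 0 z) *
          ENNReal.ofReal (‖φ 0 z‖ ^ p) =
      ∫⁻ w in D₂, u (fun k => ψ k.succ w / ψ 0 w) *
          ENNReal.ofReal (‖ψ 0 w‖ ^ p) := by
  intro u hu
  have hi : ∀ {r : ℕ} {D : Set (Fin r → ℂ)} (_ : IsOpen D) (f : Fin (N + 1) → (Fin r → ℂ) → ℂ),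
      ∀ᵐ z ∂(volume.restrict D), ∀ k, D.indicator (f k) z = f k z := by
    intro r D hD f
    filter_upwards [ae_restrict_mem hD.measurableSet] with z hz k
    exact Set.indicator_of_mem hz _
  have a1 := hi hD₁ φ
  have a2 := hi hD₂ ψ
  have key := abstract_equi (volume.restrict D₁) (volume.restrict D₂) N p hp hpe
    (fun k => D₁.indicator (φ k)) (fun k => D₂.indicator (ψ k))
    (fun k => ap_ind n p D₁ hD₁ _ (hφ k)) (fun k => ap_ind m p D₂ hD₂ _ (hψ k))
    (fun k => (hφ k).2.congr (a1.mono fun z hz => by simp only [hz]))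
    (fun k => (hψ k).2.congr (a2.mono fun z hz => by simp only [hz]))
    (by
      intro α
      have h := heq α
      unfold apNorm at h
      have h' := (Real.rpow_left_inj (by positivity) (by positivity) (by positivity)).1 h
      refine Eq.trans ?_ (h'.trans ?_)
      · exact integral_congr_ae (a1.mono fun z hz => by simp only [hz])
      · exact integral_congr_ae (a2.mono fun z hz => by simp only [hz]))
  rw [lintegral_congr_ae (g := fun z => u (fun k => D₁.indicator (φ k.succ) z / D₁.indicator (φ 0) z) *
      ENNReal.ofReal (‖D₁.indicator (φ 0) z‖ ^ p)) (a1.mono fun z hz => by simp only [hz]),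
    lintegral_congr_ae (g := fun z => u (fun k => D₂.indicator (ψ k.succ) z / D₂.indicator (ψ 0) z) *
      ENNReal.ofReal (‖D₂.indicator (ψ 0) z‖ ^ p)) (a2.mono fun z hz => by simp only [hz])]
  rw [lint_tm _ N p (fun k => D₁.indicator (φ k)) (fun k => ap_ind n p D₁ hD₁ _ (hφ k)) u hu,
    lint_tm _ N p (fun k => D₂.indicator (ψ k)) (fun k => ap_ind m p D₂ hD₂ _ (hψ k)) u hu, key]
end

section
/- The domains D₁ = 𝔹 × Δ* × Δ and D₂ = 𝔹' × Δ × Δ in ℂ⁴ are not biholomorphic, where 𝔹 is the unit ball in ℂ², 𝔹' = 𝔹∖{z₁=0}, Δ the unit disc and Δ* the punctured unit disc; indeed dim Aut(D₁) = 12 > dim Aut(𝔹') + 6 ≥ dim Aut(D₂). -/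
/-- `D₁ = 𝔹 × Δ* × Δ ⊂ ℂ⁴`, where `𝔹` is the unit ball of `ℂ²`. -/
def domD1 : Set ((ℂ × ℂ) × ℂ × ℂ) :=
  {z | ‖z.1.1‖ ^ 2 + ‖z.1.2‖ ^ 2 < 1 ∧
       (0 < ‖z.2.1‖ ∧ ‖z.2.1‖ < 1) ∧ ‖z.2.2‖ < 1}

/-- `D₂ = 𝔹' × Δ × Δ ⊂ ℂ⁴`, where `𝔹' = 𝔹 ∖ {z₁ = 0}`. -/
def domD2 : Set ((ℂ × ℂ) × ℂ × ℂ) :=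
  {z | (‖z.1.1‖ ^ 2 + ‖z.1.2‖ ^ 2 < 1 ∧ z.1.1 ≠ 0) ∧
       ‖z.2.1‖ < 1 ∧ ‖z.2.2‖ < 1}

open Metric Set Filter Topology Function

section ext
variable {E V : Type*} [NormedAddCommGroup E] [NormedSpace ℂ E]
  [NormedAddCommGroup V] [NormedSpace ℂ V] [CompleteSpace V]

/-- boundary value of `F` on the hypersurface `s = 0`. -/
noncomputable def bdVal (F : ℂ × E → V) (x : E) : V := limUnder (𝓝[≠] (0:ℂ)) (fun s => F (s, x))

lemma bdVal_diff {W : Set (ℂ × E)} {F : ℂ × E → V} {M : ℝ}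
    (hF : DifferentiableOn ℂ F (W ∩ {p | p.1 ≠ 0})) (hM : ∀ p ∈ W, p.1 ≠ 0 → ‖F p‖ ≤ M)
    {x : E} {r : ℝ} (hr : 0 < r) (hx : ∀ s : ℂ, ‖s‖ < r → (s, x) ∈ W) :
    DifferentiableOn ℂ (update (fun s => F (s, x)) 0 (bdVal F x)) (ball 0 r) := by
  apply Complex.differentiableOn_update_limUnder_of_bddAbove (ball_mem_nhds _ hr)
  · have h2 : DifferentiableOn ℂ (fun s : ℂ => (s, x)) (ball 0 r \ {0}) := by fun_prop
    refine hF.comp h2 ?_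
    intro s hs
    exact ⟨hx s (by simpa using hs.1), by simpa using hs.2⟩
  · refine ⟨M, ?_⟩
    rintro _ ⟨s, hs, rfl⟩
    exact hM _ (hx s (by simpa using hs.1)) (by simpa using hs.2)

lemma bdVal_le {W : Set (ℂ × E)} {F : ℂ × E → V} {M : ℝ}
    (hF : DifferentiableOn ℂ F (W ∩ {p | p.1 ≠ 0})) (hM : ∀ p ∈ W, p.1 ≠ 0 → ‖F p‖ ≤ M)
    {x : E} {r : ℝ} (hr : 0 < r) (hx : ∀ s : ℂ, ‖s‖ < r → (s, x) ∈ W) :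
    ∀ s : ℂ, s ≠ 0 → ‖s‖ < r → ‖F (s, x) - bdVal F x‖ ≤ (2 * M / r) * ‖s‖ := by
  have hd := bdVal_diff hF hM hr hx
  set f := update (fun s => F (s, x)) 0 (bdVal F x) with hf
  have hne : ∀ s : ℂ, s ≠ 0 → f s = F (s, x) := fun s hs => by simp [hf, hs]
  have h0 : f 0 = bdVal F x := by simp [hf]
  have hlt : ∀ s : ℂ, s ≠ 0 → ‖s‖ < r → ‖f s‖ ≤ M := fun s hs hsr => by
    rw [hne s hs]; exact hM _ (hx s hsr) hs
  have hb0 : ‖f 0‖ ≤ M := by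
    have hc : Tendsto f (𝓝[≠] 0) (𝓝 (f 0)) :=
      ((hd.differentiableAt (ball_mem_nhds _ hr)).continuousAt.tendsto).mono_left nhdsWithin_le_nhds
    refine le_of_tendsto hc.norm ?_
    filter_upwards [self_mem_nhdsWithin, mem_nhdsWithin_of_mem_nhds (ball_mem_nhds (0:ℂ) hr)]
      with s hs hs'
    exact hlt s hs (by simpa using hs')
  have hall : ∀ s : ℂ, ‖s‖ < r → ‖f s‖ ≤ M := fun s hs => by
    rcases eq_or_ne s 0 with rfl | h
    · exact hb0
    · exact hlt s h hs
  intro s hs hsr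
  have := Complex.dist_le_div_mul_dist_of_mapsTo_ball (f := f) (c := 0) (z := s) (R₂ := 2 * M) hd
    (fun z hz => by
      rw [mem_closedBall, dist_eq_norm]
      have := norm_sub_le (f z) (f 0)
      have := hall z (by simpa using hz)
      linarith) (by simpa using hsr)
  rwa [dist_eq_norm, dist_zero_right, hne s hs, h0] at this

lemma exists_box {W : Set (ℂ × E)} (hW : IsOpen W) {x : E} (hx : ((0:ℂ), x) ∈ W) :
    ∃ r > 0, ∀ y ∈ ball x r, ∀ s : ℂ, ‖s‖ < r → (s, y) ∈ W := by
  obtain ⟨r, hr, h⟩ := Metric.isOpen_iff.1 hW _ hx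
  refine ⟨r, hr, fun y hy s hs => h ?_⟩
  rw [← ball_prod_same]
  exact ⟨by simpa using hs, hy⟩

/-- `u` is holomorphic along every disc in `X`. -/
def DiscHol (u : E → V) (X : Set E) : Prop :=
  ∀ φ : ℂ → E, ∀ r > 0, DifferentiableOn ℂ φ (ball 0 r) → MapsTo φ (ball 0 r) X →
    DifferentiableOn ℂ (fun ζ => u (φ ζ)) (ball 0 r)

lemma bdVal_discHol {W : Set (ℂ × E)} (hW : IsOpen W) {F : ℂ × E → V} {M : ℝ}
    (hF : DifferentiableOn ℂ F (W ∩ {p | p.1 ≠ 0})) (hM : ∀ p ∈ W, p.1 ≠ 0 → ‖F p‖ ≤ M) :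
    DiscHol (bdVal F) {x | ((0:ℂ), x) ∈ W} := by
  intro φ R hR hφ hm
  intro ζ₀ hζ₀
  obtain ⟨r, hr, hbox⟩ := exists_box hW (hm hζ₀)
  have hφc : ContinuousAt φ ζ₀ := (hφ.differentiableAt (isOpen_ball.mem_nhds hζ₀)).continuousAt
  obtain ⟨δ, hδ, hδb⟩ := Metric.mem_nhds_iff.1
    (inter_mem (hφc.preimage_mem_nhds (ball_mem_nhds _ hr)) (isOpen_ball.mem_nhds hζ₀))
  have hs : ∀ s : ℂ, s ≠ 0 → ‖s‖ < r →
      DifferentiableOn ℂ (fun ζ => F (s, φ ζ)) (ball ζ₀ δ) := by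
    intro s hs hsr
    have h2 : DifferentiableOn ℂ (fun ζ : ℂ => (s, φ ζ)) (ball ζ₀ δ) :=
      (differentiableOn_const s).prodMk (hφ.mono fun ζ hζ => (hδb hζ).2)
    exact hF.comp h2 fun ζ hζ => ⟨hbox _ (hδb hζ).1 s hsr, hs⟩
  have hU : TendstoUniformlyOn (fun (s : ℂ) ζ => F (s, φ ζ)) (fun ζ => bdVal F (φ ζ))
      (𝓝[≠] 0) (ball ζ₀ δ) := by
    rw [Metric.tendstoUniformlyOn_iff]
    intro ε hε
    have ht : Tendsto (fun s : ℂ => (2 * M / r) * ‖s‖) (𝓝[≠] 0) (𝓝 0) := by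
      have : Continuous (fun s : ℂ => (2 * M / r) * ‖s‖) := by fun_prop
      simpa using (this.tendsto 0).mono_left nhdsWithin_le_nhds
    filter_upwards [self_mem_nhdsWithin, mem_nhdsWithin_of_mem_nhds (ball_mem_nhds (0:ℂ) hr),
      ht.eventually_lt_const hε] with s hs0 hsr hsε ζ hζ
    rw [dist_comm, dist_eq_norm]
    exact (bdVal_le hF hM hr (hbox _ (hδb hζ).1) s hs0 (by simpa using hsr)).trans_lt hsε
  have hD := hU.tendstoLocallyUniformlyOn.differentiableOn (by
    filter_upwards [self_mem_nhdsWithin, mem_nhdsWithin_of_mem_nhds (ball_mem_nhds (0:ℂ) hr)]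
      with s hs0 hsr
    exact hs s hs0 (by simpa using hsr)) isOpen_ball
  exact (hD.differentiableAt (ball_mem_nhds _ hδ)).differentiableWithinAt

lemma bdVal_tendsto_slice {W : Set (ℂ × E)} (hW : IsOpen W) {F : ℂ × E → V} {M : ℝ}
    (hF : DifferentiableOn ℂ F (W ∩ {p | p.1 ≠ 0})) (hM : ∀ p ∈ W, p.1 ≠ 0 → ‖F p‖ ≤ M)
    {x : E} (hx : ((0:ℂ), x) ∈ W) :
    Tendsto (fun s => F (s, x)) (𝓝[≠] 0) (𝓝 (bdVal F x)) := by
  obtain ⟨r, hr, hbox⟩ := exists_box hW hx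
  have hd := bdVal_diff hF hM hr (hbox x (mem_ball_self hr))
  have hc := (hd.differentiableAt (ball_mem_nhds _ hr)).continuousAt.tendsto
  rw [update_self] at hc
  refine (hc.mono_left nhdsWithin_le_nhds).congr' ?_
  filter_upwards [self_mem_nhdsWithin] with s hs
  exact update_of_ne hs _ _

lemma bdVal_tendsto {W : Set (ℂ × E)} (hW : IsOpen W) {F : ℂ × E → V} {M : ℝ}
    (hF : DifferentiableOn ℂ F (W ∩ {p | p.1 ≠ 0})) (hM : ∀ p ∈ W, p.1 ≠ 0 → ‖F p‖ ≤ M)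
    {x : E} (hx : ((0:ℂ), x) ∈ W) :
    Tendsto F (𝓝[{p | p.1 ≠ 0}] (0, x)) (𝓝 (bdVal F x)) := by
  obtain ⟨r, hr, hbox⟩ := exists_box hW hx
  have hM0 : 0 ≤ M := by
    have h1 : ((r / 2 : ℝ) : ℂ) ≠ 0 := by
      rw [Ne, Complex.ofReal_eq_zero]; positivity
    refine (norm_nonneg _).trans (hM _ (hbox x (mem_ball_self hr) ((r / 2 : ℝ) : ℂ) ?_) h1)
    rw [Complex.norm_real, Real.norm_of_nonneg (by positivity)]; linarith
  rw [Metric.tendsto_nhdsWithin_nhds]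
  intro ε hε
  obtain ⟨s₁, hs₁, hs₁r, hs₁ε⟩ : ∃ s₁ : ℂ, s₁ ≠ 0 ∧ ‖s₁‖ < r ∧ (2 * M / r) * ‖s₁‖ < ε / 4 := by
    have ht : Tendsto (fun s : ℂ => (2 * M / r) * ‖s‖) (𝓝[≠] 0) (𝓝 0) := by
      have : Continuous (fun s : ℂ => (2 * M / r) * ‖s‖) := by fun_prop
      simpa using (this.tendsto 0).mono_left nhdsWithin_le_nhds
    have := (((self_mem_nhdsWithin : {s : ℂ | s ≠ 0} ∈ 𝓝[≠] (0:ℂ)) |> fun h =>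
      (Filter.eventually_of_mem h fun s hs => hs : ∀ᶠ s in 𝓝[≠] (0:ℂ), s ≠ 0)).and
      ((Filter.eventually_of_mem (mem_nhdsWithin_of_mem_nhds (ball_mem_nhds (0:ℂ) hr))
        fun s hs => (by simpa using hs) : ∀ᶠ s in 𝓝[≠] (0:ℂ), ‖s‖ < r).and
      (ht.eventually_lt_const (show (0:ℝ) < ε / 4 by positivity)))).exists
    exact this
  have hmem : ∀ y ∈ ball x r, (s₁, y) ∈ W := fun y hy => hbox y hy s₁ hs₁r
  have hcont : ContinuousAt (fun y => F (s₁, y)) x := by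
    have h1 : ContinuousOn (fun y => F (s₁, y)) (ball x r) :=
      hF.continuousOn.comp (by fun_prop) fun y hy => ⟨hmem y hy, hs₁⟩
    exact h1.continuousAt (ball_mem_nhds _ hr)
  obtain ⟨δ, hδ, hδc⟩ := Metric.continuousAt_iff.1 hcont (ε / 4) (by positivity)
  refine ⟨min (min δ r) ‖s₁‖, by have := norm_pos_iff.2 hs₁; positivity, ?_⟩
  rintro ⟨s, y⟩ hs0 hd
  rw [Prod.dist_eq, max_lt_iff] at hd
  obtain ⟨hd1, hd2⟩ := hd
  simp only [dist_zero_right] at hd1 hd2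
  have hyr : y ∈ ball x r := hd2.trans_le ((min_le_left _ _).trans (min_le_right _ _))
  have hyδ : dist y x < δ := hd2.trans_le ((min_le_left _ _).trans (min_le_left _ _))
  have hss : ‖s‖ ≤ ‖s₁‖ := (hd1.trans_le (min_le_right _ _)).le
  have e1 := bdVal_le hF hM hr (hbox y hyr) s hs0 (hss.trans_lt hs₁r)
  have e2 := bdVal_le hF hM hr (hbox y hyr) s₁ hs₁ hs₁r
  have e3 := bdVal_le hF hM hr (hbox x (mem_ball_self hr)) s₁ hs₁ hs₁r
  have e4 := hδc hyδ
  have e5 : (2 * M / r) * ‖s‖ ≤ (2 * M / r) * ‖s₁‖ := by gcongr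
  rw [← dist_eq_norm] at e1 e2 e3
  have t1 := dist_triangle (F (s, y)) (bdVal F y) (bdVal F x)
  have t2 := dist_triangle (bdVal F y) (F (s₁, y)) (bdVal F x)
  have t3 := dist_triangle (F (s₁, y)) (F (s₁, x)) (bdVal F x)
  rw [dist_comm] at e2
  linarith

/-- no outer boundary point is reached by a punctured disc. -/
def DiscFill (W : Set (ℂ × E)) : Prop := ∀ f : ℂ → ℂ × E, ∀ r > 0, DifferentiableOn ℂ f (ball 0 r) →
  (∀ s ∈ ball (0:ℂ) r, s ≠ 0 → f s ∈ W) → f 0 ∈ W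

lemma bdVal_mem [CompleteSpace E] {W₁ W₂ : Set (ℂ × E)} (hW₁ : IsOpen W₁) (hW₂ : IsOpen W₂) {F G : ℂ × E → ℂ × E}
    {M : ℝ} (hM₂ : ∀ p ∈ W₂, ‖p‖ ≤ M)
    (hfill : DiscFill W₂)
    (hF : DifferentiableOn ℂ F (W₁ ∩ {p | p.1 ≠ 0}))
    (hG : DifferentiableOn ℂ G (W₂ ∩ {p | p.1 ≠ 0}))
    (hFm : MapsTo F (W₁ ∩ {p | p.1 ≠ 0}) (W₂ ∩ {p | p.1 ≠ 0}))
    (hGm : MapsTo G (W₂ ∩ {p | p.1 ≠ 0}) (W₁ ∩ {p | p.1 ≠ 0}))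
    (hGF : ∀ p ∈ W₁ ∩ {p | p.1 ≠ 0}, G (F p) = p)
    {x : E} (hx : ((0:ℂ), x) ∈ W₁) :
    bdVal F x ∈ W₂ ∧ (bdVal F x).1 = 0 := by
  have hM : ∀ p ∈ W₁, p.1 ≠ 0 → ‖F p‖ ≤ M := fun p hp hp' => hM₂ _ (hFm ⟨hp, hp'⟩).1
  obtain ⟨r, hr, hbox⟩ := exists_box hW₁ hx
  have hbx := hbox x (mem_ball_self hr)
  have h1 : bdVal F x ∈ W₂ := by
    have := hfill _ r hr (bdVal_diff hF hM hr hbx) (fun s hs hs0 => by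
      rw [update_of_ne hs0]
      exact (hFm ⟨hbx s (by simpa using hs), hs0⟩).1)
    rwa [update_self] at this
  refine ⟨h1, ?_⟩
  by_contra hne
  have hop : IsOpen (W₂ ∩ {p : ℂ × E | p.1 ≠ 0}) :=
    hW₂.inter (isOpen_ne_fun continuous_fst continuous_const)
  have hGc : ContinuousAt G (bdVal F x) := hG.continuousOn.continuousAt (hop.mem_nhds ⟨h1, hne⟩)
  have hlim := hGc.tendsto.comp (bdVal_tendsto_slice hW₁ hF hM hx)
  have hlim2 : Tendsto (fun s : ℂ => (s, x)) (𝓝[≠] 0) (𝓝 (G (bdVal F x))) := by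
    refine hlim.congr' ?_
    filter_upwards [self_mem_nhdsWithin, mem_nhdsWithin_of_mem_nhds (ball_mem_nhds (0:ℂ) hr)]
      with s hs0 hsr
    exact hGF _ ⟨hbx s (by simpa using hsr), hs0⟩
  have hlim3 : Tendsto (fun s : ℂ => (s, x)) (𝓝[≠] 0) (𝓝 (0, x)) := by
    have : Continuous (fun s : ℂ => (s, x)) := by fun_prop
    exact (this.tendsto 0).mono_left nhdsWithin_le_nhds
  have heq := tendsto_nhds_unique hlim2 hlim3
  have := (hGm ⟨h1, hne⟩).2
  rw [mem_ofPred_eq, heq] at this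
  exact this rfl

lemma bdVal_inv [CompleteSpace E] {W₁ W₂ : Set (ℂ × E)} (hW₁ : IsOpen W₁) (hW₂ : IsOpen W₂) {F G : ℂ × E → ℂ × E}
    {M : ℝ} (hM₁ : ∀ p ∈ W₁, ‖p‖ ≤ M) (hM₂ : ∀ p ∈ W₂, ‖p‖ ≤ M)
    (hfill : DiscFill W₂)
    (hF : DifferentiableOn ℂ F (W₁ ∩ {p | p.1 ≠ 0}))
    (hG : DifferentiableOn ℂ G (W₂ ∩ {p | p.1 ≠ 0}))
    (hFm : MapsTo F (W₁ ∩ {p | p.1 ≠ 0}) (W₂ ∩ {p | p.1 ≠ 0}))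
    (hGm : MapsTo G (W₂ ∩ {p | p.1 ≠ 0}) (W₁ ∩ {p | p.1 ≠ 0}))
    (hGF : ∀ p ∈ W₁ ∩ {p | p.1 ≠ 0}, G (F p) = p)
    {x : E} (hx : ((0:ℂ), x) ∈ W₁) :
    bdVal G (bdVal F x).2 = (0, x) := by
  have hM : ∀ p ∈ W₁, p.1 ≠ 0 → ‖F p‖ ≤ M := fun p hp hp' => hM₂ _ (hFm ⟨hp, hp'⟩).1
  have hM' : ∀ p ∈ W₂, p.1 ≠ 0 → ‖G p‖ ≤ M := fun p hp hp' => hM₁ _ (hGm ⟨hp, hp'⟩).1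
  obtain ⟨r, hr, hbox⟩ := exists_box hW₁ hx
  have hbx := hbox x (mem_ball_self hr)
  obtain ⟨h1, h2⟩ := bdVal_mem hW₁ hW₂ hM₂ hfill hF hG hFm hGm hGF hx
  have hb : bdVal F x = (0, (bdVal F x).2) := Prod.ext h2 rfl
  have hT := bdVal_tendsto hW₂ hG hM' (x := (bdVal F x).2) (by rw [← hb]; exact h1)
  rw [← hb] at hT
  have hS : Tendsto (fun s => F (s, x)) (𝓝[≠] 0) (𝓝[{p | p.1 ≠ 0}] (bdVal F x)) := by
    refine tendsto_nhdsWithin_iff.2 ⟨bdVal_tendsto_slice hW₁ hF hM hx, ?_⟩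
    filter_upwards [self_mem_nhdsWithin, mem_nhdsWithin_of_mem_nhds (ball_mem_nhds (0:ℂ) hr)]
      with s hs0 hsr
    exact (hFm ⟨hbx s (by simpa using hsr), hs0⟩).2
  have hlim2 : Tendsto (fun s : ℂ => (s, x)) (𝓝[≠] 0) (𝓝 (bdVal G (bdVal F x).2)) := by
    refine (hT.comp hS).congr' ?_
    filter_upwards [self_mem_nhdsWithin, mem_nhdsWithin_of_mem_nhds (ball_mem_nhds (0:ℂ) hr)]
      with s hs0 hsr
    exact hGF _ ⟨hbx s (by simpa using hsr), hs0⟩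
  have hlim3 : Tendsto (fun s : ℂ => (s, x)) (𝓝[≠] 0) (𝓝 (0, x)) := by
    have : Continuous (fun s : ℂ => (s, x)) := by fun_prop
    exact (this.tendsto 0).mono_left nhdsWithin_le_nhds
  exact tendsto_nhds_unique hlim2 hlim3

end ext

section mobius
open scoped ComplexConjugate

noncomputable def mob (a w : ℂ) : ℂ := (w - a) / (1 - conj a * w)

lemma mob_den {a w : ℂ} (ha : ‖a‖ < 1) (hw : ‖w‖ < 1) : 1 - conj a * w ≠ 0 := by
  intro h
  have h1 : conj a * w = 1 := (sub_eq_zero.1 h).symm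
  have h2 : ‖a‖ * ‖w‖ = 1 := by
    have := congrArg norm h1
    simpa using this
  nlinarith [norm_nonneg a, norm_nonneg w]

lemma mob_lt {a w : ℂ} (ha : ‖a‖ < 1) (hw : ‖w‖ < 1) : ‖mob a w‖ < 1 := by
  have hd := mob_den ha hw
  rw [mob, norm_div, div_lt_one (norm_pos_iff.2 hd)]
  have ha2 : ‖a‖ ^ 2 < 1 := by nlinarith [norm_nonneg a]
  have hw2 : ‖w‖ ^ 2 < 1 := by nlinarith [norm_nonneg w]
  refine lt_of_pow_lt_pow_left₀ 2 (norm_nonneg _) ?_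
  rw [Complex.sq_norm, Complex.normSq_apply] at *
  rw [Complex.sq_norm, Complex.normSq_apply] at *
  simp at *
  nlinarith [mul_pos (sub_pos.2 ha2) (sub_pos.2 hw2)]

lemma mob_inv {a w : ℂ} (ha : ‖a‖ < 1) (hw : ‖w‖ < 1) : mob (-a) (mob a w) = w := by
  have hd := mob_den ha hw
  have hd2 := mob_den (a := -a) (by simpa using ha) (mob_lt ha hw)
  have haa := mob_den ha ha
  unfold mob at *
  rw [div_eq_iff hd2]
  simp only [map_neg]
  have hq : (w - a) / (1 - conj a * w) * (1 - conj a * w) = w - a := div_mul_cancel₀ _ hd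
  linear_combination hq

lemma mob_self (a : ℂ) : mob a a = 0 := by simp [mob]
lemma mob_neg_zero (a : ℂ) : mob (-a) 0 = a := by simp [mob]

lemma mob_diff {a : ℂ} (ha : ‖a‖ < 1) {f : ℂ → ℂ} {s : Set ℂ} (hf : DifferentiableOn ℂ f s)
    (hs : ∀ z ∈ s, ‖f z‖ < 1) : DifferentiableOn ℂ (fun z => mob a (f z)) s := by
  unfold mob
  exact (hf.sub_const a).div ((differentiableOn_const _).sub ((differentiableOn_const _).mul hf))
    fun z hz => mob_den ha (hs z hz)
end mobius

abbrev E2 := EuclideanSpace ℂ (Fin 2)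

/-- `𝔹 × Δ` -/
def domX : Set (Fin 3 → ℂ) := {x | ‖(!₂[x 0, x 1] : E2)‖ < 1 ∧ ‖x 2‖ < 1}
/-- `Δ³` -/
def domY : Set (Fin 3 → ℂ) := {y | ∀ i, ‖y i‖ < 1}

def emb (z : E2) : Fin 3 → ℂ := ![z 0, z 1, 0]

lemma emb_mem {z : E2} (hz : ‖z‖ < 1) : emb z ∈ domX := by
  have : (!₂[z 0, z 1] : E2) = z := by
    ext i; fin_cases i <;> simp
  simp [domX, emb, this, hz]

lemma emb_diff {φ : ℂ → E2} {s : Set ℂ} (h : DifferentiableOn ℂ φ s) :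
    DifferentiableOn ℂ (fun ζ => emb (φ ζ)) s := by
  rw [differentiableOn_pi]
  intro i
  fin_cases i
  · simpa [emb] using (differentiableOn_euclidean.1 h 0)
  · simpa [emb] using (differentiableOn_euclidean.1 h 1)
  · simp [emb]

/-- four test vectors -/
noncomputable def tv : Fin 4 → E2 := ![!₂[1, 0], !₂[0, 1], !₂[3/5, 4/5], !₂[4/5, 3/5]]

lemma tv_norm (j : Fin 4) : ‖tv j‖ = 1 := by
  rw [← sq_eq_sq₀ (norm_nonneg _) zero_le_one, EuclideanSpace.norm_sq_eq]
  fin_cases j <;> simp [tv] <;> norm_num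

lemma tv_inner {j k : Fin 4} (h : j ≠ k) : ‖inner ℂ (tv j) (tv k)‖ ≤ 24 / 25 := by
  have e : (starRingEnd ℂ) 5 = 5 := Complex.conj_ofNat 5
  have e3 : (starRingEnd ℂ) 3 = 3 := Complex.conj_ofNat 3
  have e4 : (starRingEnd ℂ) 4 = 4 := Complex.conj_ofNat 4
  fin_cases j <;> fin_cases k <;> first | exact absurd rfl h | skip
  all_goals simp [tv, PiLp.inner_apply, e, e3, e4] <;> norm_num

lemma tv_add {j k : Fin 4} (h : j ≠ k) {ω : ℂ} (hω : ‖ω‖ = 1) : ‖tv j + ω • tv k‖ ≤ 99 / 50 := by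
  have h1 : ‖tv j + ω • tv k‖ ^ 2 ≤ 98 / 25 := by
    rw [norm_add_sq (𝕜 := ℂ), norm_smul, hω, tv_norm, tv_norm, inner_smul_right]
    have := (Complex.re_le_norm (ω * inner ℂ (tv j) (tv k)))
    rw [norm_mul, hω, one_mul] at this
    have := tv_inner h
    simp only [RCLike.re_eq_complex_re]
    linarith
  nlinarith [norm_nonneg (tv j + ω • tv k)]

theorem ball_polydisc {u v : (Fin 3 → ℂ) → (Fin 3 → ℂ)}
    (hu : DiscHol u domX) (hv : DiscHol v domY) (hum : MapsTo u domX domY) (hvm : MapsTo v domY domX)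
    (hvu : ∀ x ∈ domX, v (u x) = x) : False := by
  have h0X : emb 0 ∈ domX := emb_mem (by simp)
  have h00 : emb 0 = 0 := by ext i; fin_cases i <;> simp [emb]
  set a : Fin 3 → ℂ := u (emb 0) with ha
  have haY : ∀ i, ‖a i‖ < 1 := hum h0X
  have hnaY : ∀ i, ‖-a i‖ < 1 := fun i => by simpa using haY i
  -- normalised components
  set h : Fin 3 → E2 → ℂ := fun i z => mob (a i) (u (emb z) i) with hh
  have h_zero : ∀ i, h i 0 = 0 := fun i => by simp only [hh, ← ha, mob_self]
  have h_lt : ∀ i z, ‖z‖ < 1 → ‖h i z‖ < 1 := fun i z hz => mob_lt (haY i) (hum (emb_mem hz) i)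
  have h_diff : ∀ i (φ : ℂ → E2) (r : ℝ), 0 < r → DifferentiableOn ℂ φ (ball 0 r) →
      (∀ ζ ∈ ball (0:ℂ) r, ‖φ ζ‖ < 1) → DifferentiableOn ℂ (fun ζ => h i (φ ζ)) (ball 0 r) := by
    intro i φ r hr hφ hm
    have := hu (fun ζ => emb (φ ζ)) r hr (emb_diff hφ) (fun ζ hζ => emb_mem (hm ζ hζ))
    exact mob_diff (haY i) (differentiableOn_pi.1 this i) fun ζ hζ => hum (emb_mem (hm ζ hζ)) i
  -- the norm is not decreased
  have key : ∀ z : E2, ‖z‖ < 1 → z ≠ 0 → ∃ i, ‖z‖ ≤ ‖h i z‖ := by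
    intro z hz hz0
    by_contra hcon
    push Not at hcon
    obtain ⟨μ, hμ0, hμz, hμ⟩ : ∃ μ : ℝ, 0 < μ ∧ μ < ‖z‖ ∧ ∀ i, ‖h i z‖ < μ := by
      have hp := norm_pos_iff.2 hz0
      obtain ⟨μ, h1, h2⟩ := exists_between
        (show max 0 (max ‖h 0 z‖ (max ‖h 1 z‖ ‖h 2 z‖)) < ‖z‖ by simp [hp, hcon])
      simp only [max_lt_iff] at h1
      refine ⟨μ, h1.1, h2, fun i => ?_⟩
      fin_cases i
      exacts [h1.2.1, h1.2.2.1, h1.2.2.2]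
    have hlt : ∀ i, ∀ ζ ∈ ball (0:ℂ) 1, ‖ζ * (h i z / μ)‖ < 1 := by
      intro i ζ hζ
      have h1 : ‖h i z / μ‖ < 1 := by
        rw [norm_div, Complex.norm_real, Real.norm_of_nonneg hμ0.le, div_lt_one hμ0]; exact hμ i
      have h2 : ‖ζ‖ < 1 := by simpa using hζ
      rw [norm_mul]
      nlinarith [norm_nonneg ζ, norm_nonneg (h i z / μ)]
    set φ : ℂ → Fin 3 → ℂ := fun ζ i => mob (-a i) (ζ * (h i z / μ)) with hφ
    have hφd : DifferentiableOn ℂ φ (ball 0 1) := by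
      rw [differentiableOn_pi]
      intro i
      exact mob_diff (hnaY i) (by fun_prop) (hlt i)
    have hφm : MapsTo φ (ball 0 1) domY := fun ζ hζ i => mob_lt (hnaY i) (hlt i ζ hζ)
    have hvφ := differentiableOn_pi.1 (hv φ 1 one_pos hφd hφm)
    set ψ : ℂ → E2 := fun ζ => !₂[v (φ ζ) 0, v (φ ζ) 1] with hψ
    have hψd : DifferentiableOn ℂ ψ (ball 0 1) := by
      rw [differentiableOn_euclidean]
      intro i
      fin_cases i
      · simpa [hψ] using hvφ 0
      · simpa [hψ] using hvφ 1
    have hφ0 : φ 0 = a := by ext i; simp [hφ, mob_neg_zero]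
    have hψ0 : ψ 0 = 0 := by
      have hva : v a = 0 := by rw [ha, hvu _ h0X, h00]
      simp only [hψ, hφ0, hva]
      ext i; fin_cases i <;> simp
    have hφμ : φ μ = u (emb z) := by
      have : (μ : ℂ) ≠ 0 := by exact_mod_cast hμ0.ne'
      ext i
      simp only [hφ, mul_div_cancel₀ _ this, hh]
      exact mob_inv (haY i) (hum (emb_mem hz) i)
    have hψμ : ψ μ = z := by
      simp only [hψ, hφμ, hvu _ (emb_mem hz)]
      ext i; fin_cases i <;> simp [emb]
    have := Complex.norm_le_norm_of_mapsTo_ball (f := ψ) (R := 1) (z := μ) hψd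
      (fun ζ hζ => by simpa using (hvm (hφm hζ)).1.le) hψ0
      (by rw [Complex.norm_real, Real.norm_of_nonneg hμ0.le]; linarith)
    rw [hψμ, Complex.norm_real, Real.norm_of_nonneg hμ0.le] at this
    linarith
  -- rigidity
  have lin : ∀ j, ∃ i, ∃ c : ℂ, ‖c‖ = 1 ∧ ∀ ζ : ℂ, ‖ζ‖ < 1 → h i (ζ • tv j) = ζ * c := by
    intro j
    have hn : ∀ ζ : ℂ, ‖ζ • tv j‖ = ‖ζ‖ := fun ζ => by rw [norm_smul, tv_norm, mul_one]
    have hhalf : ‖(1/2 : ℂ)‖ = 1/2 := by norm_num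
    obtain ⟨i, hi⟩ := key ((1/2 : ℂ) • tv j) (by rw [hn, hhalf]; norm_num) (by
      rw [← norm_pos_iff, hn, hhalf]; norm_num)
    rw [hn, hhalf] at hi
    refine ⟨i, ?_⟩
    set g : ℂ → ℂ := fun ζ => h i (ζ • tv j) with hg
    have hg0 : g 0 = 0 := by simp [hg, h_zero]
    have hgd : DifferentiableOn ℂ g (ball 0 1) :=
      h_diff i (fun ζ => ζ • tv j) 1 one_pos (by fun_prop) (fun ζ hζ => by
        rw [hn]; simpa using hζ)
    have hgm : MapsTo g (ball 0 1) (closedBall (g 0) 1) := fun ζ hζ => by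
      rw [hg0, mem_closedBall_zero_iff]
      exact (h_lt i _ (by rw [hn]; simpa using hζ)).le
    have hmem : (1/2 : ℂ) ∈ ball (0:ℂ) 1 := by simp; norm_num
    have hle := Complex.norm_dslope_le_div_of_mapsTo_ball hgd hgm hmem
    have hge : 1 ≤ ‖dslope g 0 (1/2)‖ := by
      rw [dslope_of_ne _ (by norm_num), slope_def_field, hg0, norm_div, sub_zero, sub_zero, hhalf,
        le_div_iff₀ (by norm_num)]
      linarith
    obtain ⟨C, hC, hCe⟩ := Complex.affine_of_mapsTo_ball_of_exists_norm_dslope_eq_div' hgd hgm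
      ⟨_, hmem, le_antisymm hle (by rw [div_one]; exact hge)⟩
    refine ⟨C, by simpa using hC, fun ζ hζ => ?_⟩
    have := hCe (show ζ ∈ ball (0:ℂ) 1 by simpa using hζ)
    simpa [hg0] using this
  choose I c hc hI using lin
  obtain ⟨j, k, hjk, hIjk⟩ := Fintype.exists_ne_map_eq_of_card_lt I (by simp)
  have hck : c k ≠ 0 := by rw [← norm_pos_iff, hc]; norm_num
  set ω : ℂ := c j / c k with hωd
  have hω : ‖ω‖ = 1 := by simp [hωd, hc]
  have hN := tv_add hjk hω
  set L : ℂ := 1/1000 with hL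
  have hLn : ‖L‖ = 1/1000 := by simp [hL]
  set R : ℝ := 1/2 with hR
  set φ : ℂ → E2 := fun ζ => L • tv j - ζ • (tv j + ω • tv k) with hφ
  have hφlt : ∀ ζ ∈ ball (0:ℂ) (999/1980), ‖φ ζ‖ < 1 := by
    intro ζ hζ
    have h1 : ‖ζ‖ < 999/1980 := by simpa using hζ
    have h2 := norm_sub_le (L • tv j) (ζ • (tv j + ω • tv k))
    rw [norm_smul, norm_smul, hLn, tv_norm] at h2
    have h3 : ‖ζ‖ * ‖tv j + ω • tv k‖ ≤ ‖ζ‖ * (99/50) := by gcongr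
    simp only [hφ]
    linarith
  have hv0 : h (I j) (φ 0) = L * c j := by
    simp only [hφ, zero_smul, sub_zero]
    exact hI j L (by rw [hLn]; norm_num)
  have hv1 : h (I j) (φ L) = -(L * c j) := by
    have e : φ L = (-(L * ω)) • tv k := by
      simp only [hφ]; module
    rw [e, hIjk, hI k _ (by rw [norm_neg, norm_mul, hLn, hω]; norm_num), hωd]
    field_simp
  have fin := Complex.dist_le_div_mul_dist_of_mapsTo_ball (f := fun ζ => h (I j) (φ ζ)) (c := 0)
    (z := L) (R₁ := 999/1980) (R₂ := 1001/1000)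
    (h_diff (I j) φ _ (by norm_num) (by fun_prop) hφlt)
    (fun ζ hζ => by
      rw [mem_closedBall, dist_eq_norm, hv0]
      have h1 := norm_sub_le (h (I j) (φ ζ)) (L * c j)
      rw [norm_mul, hLn, hc] at h1
      have h2 := h_lt (I j) _ (hφlt ζ hζ)
      linarith) (by simp only [mem_ball, dist_zero_right, hLn]; norm_num)
  simp only [hv0, hv1] at fin
  rw [dist_eq_norm, dist_zero_right, hLn] at fin
  have e : -(L * c j) - L * c j = -2 * (L * c j) := by ring
  rw [e, norm_mul, norm_mul, hLn, hc] at fin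
  norm_num at fin

abbrev E3 := Fin 3 → ℂ

/-- `D₁` with the puncture filled, coordinates reordered -/
def domW1 : Set (ℂ × E3) := {p | ‖p.1‖ < 1 ∧ p.2 ∈ domX}
/-- `D₂` with the hypersurface filled, coordinates reordered -/
def domW2 : Set (ℂ × E3) := {p | ‖(!₂[p.1, p.2 0] : E2)‖ < 1 ∧ ‖p.2 1‖ < 1 ∧ ‖p.2 2‖ < 1}

lemma e2_lt (a b : ℂ) : ‖(!₂[a, b] : E2)‖ < 1 ↔ ‖a‖ ^ 2 + ‖b‖ ^ 2 < 1 := by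
  have h : ‖(!₂[a, b] : E2)‖ ^ 2 = ‖a‖ ^ 2 + ‖b‖ ^ 2 := by
    rw [EuclideanSpace.norm_sq_eq]; simp
  rw [← h, sq_lt_one_iff₀ (norm_nonneg _)]

lemma e2_cont {α : Type*} [TopologicalSpace α] {f g : α → ℂ} (hf : Continuous f) (hg : Continuous g) :
    Continuous (fun x => ‖(!₂[f x, g x] : E2)‖) := by
  have : (fun x => ‖(!₂[f x, g x] : E2)‖) = fun x => Real.sqrt (‖f x‖ ^ 2 + ‖g x‖ ^ 2) := by
    funext x; rw [EuclideanSpace.norm_eq]; simp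
  rw [this]; fun_prop

lemma e2_diff {f g : ℂ → ℂ} {s : Set ℂ} (hf : DifferentiableOn ℂ f s) (hg : DifferentiableOn ℂ g s) :
    DifferentiableOn ℂ (fun x => (!₂[f x, g x] : E2)) s := by
  rw [differentiableOn_euclidean]
  intro i
  fin_cases i
  · simpa using hf
  · simpa using hg

lemma isOpen_domW1 : IsOpen domW1 := by
  have h1 : IsOpen {p : ℂ × E3 | ‖p.1‖ < 1} := isOpen_lt (by fun_prop) continuous_const
  have h2 : IsOpen {p : ℂ × E3 | ‖(!₂[p.2 0, p.2 1] : E2)‖ < 1} :=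
    isOpen_lt (e2_cont (by fun_prop) (by fun_prop)) continuous_const
  have h3 : IsOpen {p : ℂ × E3 | ‖p.2 2‖ < 1} := isOpen_lt (by fun_prop) continuous_const
  exact h1.inter (h2.inter h3)

lemma isOpen_domW2 : IsOpen domW2 := by
  have h1 : IsOpen {p : ℂ × E3 | ‖(!₂[p.1, p.2 0] : E2)‖ < 1} :=
    isOpen_lt (e2_cont (by fun_prop) (by fun_prop)) continuous_const
  have h2 : IsOpen {p : ℂ × E3 | ‖p.2 1‖ < 1} := isOpen_lt (by fun_prop) continuous_const
  have h3 : IsOpen {p : ℂ × E3 | ‖p.2 2‖ < 1} := isOpen_lt (by fun_prop) continuous_const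
  exact h1.inter (h2.inter h3)

lemma max_aux {V : Type*} [NormedAddCommGroup V] [NormedSpace ℂ V] {f : ℂ → V} {r : ℝ} (hr : 0 < r)
    (hf : DifferentiableOn ℂ f (ball 0 r)) (h : ∀ s ∈ ball (0:ℂ) r, s ≠ 0 → ‖f s‖ < 1) :
    ‖f 0‖ < 1 := by
  by_contra hcon
  push Not at hcon
  have hm : IsMaxOn (norm ∘ f) (ball 0 r) 0 := by
    intro s hs
    rcases eq_or_ne s 0 with rfl | hs0
    · exact le_refl (‖f 0‖)
    · exact (h s hs hs0).le.trans hcon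
  have hmem : ((r / 2 : ℝ) : ℂ) ∈ ball (0:ℂ) r := by
    rw [mem_ball_zero_iff, Complex.norm_real, Real.norm_of_nonneg (by positivity)]; linarith
  have h1 := Complex.norm_eqOn_of_isPreconnected_of_isMaxOn (convex_ball (0:ℂ) r).isPreconnected
    isOpen_ball hf (mem_ball_self hr) hm hmem
  have h2 := h _ hmem (by rw [Ne, Complex.ofReal_eq_zero]; positivity)
  simp only [comp_apply, const_apply] at h1
  linarith

lemma fill_W1 : DiscFill domW1 := by
  intro f r hr hf h
  have h1 : DifferentiableOn ℂ (fun s => (f s).1) (ball 0 r) := hf.fst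
  have h2 := differentiableOn_pi.1 hf.snd
  exact ⟨max_aux hr h1 fun s hs h0 => (h s hs h0).1,
    max_aux hr (e2_diff (h2 0) (h2 1)) fun s hs h0 => (h s hs h0).2.1,
    max_aux hr (h2 2) fun s hs h0 => (h s hs h0).2.2⟩

lemma fill_W2 : DiscFill domW2 := by
  intro f r hr hf h
  have h1 : DifferentiableOn ℂ (fun s => (f s).1) (ball 0 r) := hf.fst
  have h2 := differentiableOn_pi.1 hf.snd
  exact ⟨max_aux hr (e2_diff h1 (h2 0)) fun s hs h0 => (h s hs h0).1,
    max_aux hr (h2 1) fun s hs h0 => (h s hs h0).2.1,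
    max_aux hr (h2 2) fun s hs h0 => (h s hs h0).2.2⟩

lemma bdd_aux {p : ℂ × E3} (h : ‖p.1‖ ≤ 1) (h0 : ‖p.2 0‖ ≤ 1) (h1 : ‖p.2 1‖ ≤ 1) (h2 : ‖p.2 2‖ ≤ 1) :
    ‖p‖ ≤ 1 := by
  rw [Prod.norm_def, max_le_iff, pi_norm_le_iff_of_nonneg zero_le_one]
  refine ⟨h, fun i => ?_⟩
  fin_cases i <;> assumption

lemma e2_le {a b : ℂ} (h : ‖(!₂[a, b] : E2)‖ < 1) : ‖a‖ ≤ 1 ∧ ‖b‖ ≤ 1 := by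
  rw [e2_lt] at h
  constructor <;> nlinarith [sq_nonneg ‖a‖, sq_nonneg ‖b‖, norm_nonneg a, norm_nonneg b]

lemma bdd_W1 : ∀ p ∈ domW1, ‖p‖ ≤ 1 := fun _ hp =>
  bdd_aux hp.1.le (e2_le hp.2.1).1 (e2_le hp.2.1).2 hp.2.2.le

lemma bdd_W2 : ∀ p ∈ domW2, ‖p‖ ≤ 1 := fun _ hp =>
  bdd_aux (e2_le hp.1).1 (e2_le hp.1).2 hp.2.1.le hp.2.2.le

/-- coordinate changes -/
def k1 (p : ℂ × E3) : (ℂ × ℂ) × ℂ × ℂ := ((p.2 0, p.2 1), p.1, p.2 2)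
def kOneInv (z : (ℂ × ℂ) × ℂ × ℂ) : ℂ × E3 := (z.2.1, ![z.1.1, z.1.2, z.2.2])
def k2 (p : ℂ × E3) : (ℂ × ℂ) × ℂ × ℂ := ((p.1, p.2 0), p.2 1, p.2 2)
def kTwoInv (z : (ℂ × ℂ) × ℂ × ℂ) : ℂ × E3 := (z.1.1, ![z.1.2, z.2.1, z.2.2])

lemma kOne_right (z) : k1 (kOneInv z) = z := by simp [k1, kOneInv]
lemma kTwo_right (z) : k2 (kTwoInv z) = z := by simp [k2, kTwoInv]
lemma kOne_left (p) : kOneInv (k1 p) = p := by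
  refine Prod.ext rfl ?_
  ext i; fin_cases i <;> simp [k1, kOneInv]
lemma kTwo_left (p) : kTwoInv (k2 p) = p := by
  refine Prod.ext rfl ?_
  ext i; fin_cases i <;> simp [k2, kTwoInv]

lemma k1_diff : Differentiable ℂ k1 := by unfold k1; fun_prop
lemma k2_diff : Differentiable ℂ k2 := by unfold k2; fun_prop
lemma kOneInv_diff : Differentiable ℂ kOneInv := by
  refine Differentiable.prodMk (by fun_prop) (differentiable_pi.2 fun i => ?_)
  fin_cases i <;> simp
lemma kTwoInv_diff : Differentiable ℂ kTwoInv := by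
  refine Differentiable.prodMk (by fun_prop) (differentiable_pi.2 fun i => ?_)
  fin_cases i <;> simp

lemma k1_mem (p) : k1 p ∈ domD1 ↔ p ∈ domW1 ∩ {p | p.1 ≠ 0} := by
  change (_ ∧ (_ ∧ _) ∧ _) ↔ (_ ∧ _ ∧ _) ∧ _ ≠ _
  rw [e2_lt, norm_pos_iff]
  simp only [k1]
  tauto
lemma k2_mem (p) : k2 p ∈ domD2 ↔ p ∈ domW2 ∩ {p | p.1 ≠ 0} := by
  change ((_ ∧ _) ∧ _ ∧ _) ↔ (_ ∧ _ ∧ _) ∧ _ ≠ _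
  rw [e2_lt]
  simp only [k2]
  tauto

/-- the domains `D₁ = 𝔹 × Δ* × Δ` and `D₂ = 𝔹' × Δ × Δ` in `ℂ⁴` are
not biholomorphically equivalent. -/
theorem domD1_not_biholomorphic_domD2 :
    ¬ ∃ F G : ((ℂ × ℂ) × ℂ × ℂ) → ((ℂ × ℂ) × ℂ × ℂ),
      DifferentiableOn ℂ F domD1 ∧ DifferentiableOn ℂ G domD2 ∧
      Set.MapsTo F domD1 domD2 ∧ Set.MapsTo G domD2 domD1 ∧
      (∀ z ∈ domD1, G (F z) = z) ∧ (∀ w ∈ domD2, F (G w) = w) := by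
  rintro ⟨F, G, hF, hG, hFm, hGm, hGF, hFG⟩
  set f : ℂ × E3 → ℂ × E3 := fun p => kTwoInv (F (k1 p)) with hf
  set g : ℂ × E3 → ℂ × E3 := fun p => kOneInv (G (k2 p)) with hg
  have fd : DifferentiableOn ℂ f (domW1 ∩ {p | p.1 ≠ 0}) :=
    kTwoInv_diff.comp_differentiableOn
      (hF.comp k1_diff.differentiableOn fun p hp => (k1_mem p).2 hp)
  have gd : DifferentiableOn ℂ g (domW2 ∩ {p | p.1 ≠ 0}) :=
    kOneInv_diff.comp_differentiableOn
      (hG.comp k2_diff.differentiableOn fun p hp => (k2_mem p).2 hp)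
  have fm : MapsTo f (domW1 ∩ {p | p.1 ≠ 0}) (domW2 ∩ {p | p.1 ≠ 0}) := fun p hp => by
    rw [← k2_mem, hf, kTwo_right]; exact hFm ((k1_mem p).2 hp)
  have gm : MapsTo g (domW2 ∩ {p | p.1 ≠ 0}) (domW1 ∩ {p | p.1 ≠ 0}) := fun p hp => by
    rw [← k1_mem, hg, kOne_right]; exact hGm ((k2_mem p).2 hp)
  have gf : ∀ p ∈ domW1 ∩ {p | p.1 ≠ 0}, g (f p) = p := fun p hp => by
    simp only [hf, hg, kTwo_right, hGF _ ((k1_mem p).2 hp), kOne_left]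
  have fg : ∀ p ∈ domW2 ∩ {p | p.1 ≠ 0}, f (g p) = p := fun p hp => by
    simp only [hf, hg, kOne_right, hFG _ ((k2_mem p).2 hp), kTwo_left]
  have hX : {x : E3 | ((0:ℂ), x) ∈ domW1} = domX := by
    ext x; change (‖(0:ℂ)‖ < 1 ∧ _) ↔ _; simp
  have hY : {x : E3 | ((0:ℂ), x) ∈ domW2} = domY := by
    ext x
    change (_ ∧ _ ∧ _) ↔ ∀ i : Fin 3, ‖x i‖ < 1
    rw [e2_lt, Fin.forall_fin_succ, Fin.forall_fin_succ, Fin.forall_fin_succ]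
    simp
  have hX' : ∀ x ∈ domX, ((0:ℂ), x) ∈ domW1 := fun x hx => by rw [← hX] at hx; exact hx
  have hY' : ∀ x ∈ domY, ((0:ℂ), x) ∈ domW2 := fun x hx => by rw [← hY] at hx; exact hx
  have hu := bdVal_discHol isOpen_domW1 fd (M := 1) fun p hp h0 => bdd_W2 _ (fm ⟨hp, h0⟩).1
  have hv := bdVal_discHol isOpen_domW2 gd (M := 1) fun p hp h0 => bdd_W1 _ (gm ⟨hp, h0⟩).1
  rw [hX] at hu
  rw [hY] at hv
  refine ball_polydisc (u := fun x => (bdVal f x).2) (v := fun y => (bdVal g y).2)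
    (fun φ r hr h1 h2 => (hu φ r hr h1 h2).snd) (fun φ r hr h1 h2 => (hv φ r hr h1 h2).snd) ?_ ?_ ?_
  · intro x hx
    obtain ⟨h1, h2⟩ := bdVal_mem isOpen_domW1 isOpen_domW2 bdd_W2 fill_W2 fd gd fm gm gf (hX' x hx)
    rw [← hY]
    change ((0:ℂ), (bdVal f x).2) ∈ domW2
    rw [← h2]; exact h1
  · intro x hx
    obtain ⟨h1, h2⟩ := bdVal_mem isOpen_domW2 isOpen_domW1 bdd_W1 fill_W1 gd fd gm fm fg (hY' x hx)
    rw [← hX]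
    change ((0:ℂ), (bdVal g x).2) ∈ domW1
    rw [← h2]; exact h1
  · intro x hx
    have := bdVal_inv isOpen_domW1 isOpen_domW2 bdd_W1 bdd_W2 fill_W2 fd gd fm gm gf (hX' x hx)
    simp only [this]
end
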